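/- arXiv:2401.04019 — 7 statements merged into one kernel-verified Lean document; each statement's English description precedes it below -/
import Mathlib

section
/- Let R and S be integers with R ≥ 2, 1 ≤ S < R and 2S ≠ R, and let n ≥ 0. Then the number of partitions of n all of whose parts are congruent to S or R−S modulo R and in which S does not occur as a part is at least ρ_R(n). (This is the case k = 1 of the truncated Jacobi Triple Product conjecture: the coefficient a_{S,R,1}(n) is non-negative.) -/
/-!
Since `ρ` takes only the values `-1`, `0` and `1`, the bound has content only where `ρ n = 1`. There
`n = R * m` with `m` a pentagonal number of even index, and such an `m` is `0` or at least `5`. For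
`m = 0` the empty partition is counted, and for `m ≥ 3` so is `R * m = (R + S) + ((m - 1) * R - S)`.
-/

/-- The partitions of `n` into parts congruent to `S` or `R - S` modulo `R`, none of them equal
to `S`; they are counted by `y_{S,R,0}(n)`. Partitions are multisets of positive naturals. As
`R - S` is a truncated subtraction, the notion is the intended one only for `S ≤ R`. -/
def residuePartitionsAvoiding (R S : ℕ) (n : ℤ) : Set (Multiset ℕ) :=
  {s | (s.sum : ℤ) = n ∧
    (∀ a ∈ s, 0 < a ∧ (a % R = S % R ∨ a % R = (R - S) % R)) ∧ S ∉ s}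

section Partitions

variable (R S : ℕ)

theorem finite_residuePartitionsAvoiding (n : ℤ) :
    (residuePartitionsAvoiding R S n).Finite := by
  refine (Set.finite_range (Nat.Partition.parts (n := n.toNat))).subset ?_
  rintro s ⟨hsum, hparts, -⟩
  exact ⟨⟨s, fun ha ↦ (hparts _ ha).1, by omega⟩, rfl⟩

theorem zero_mem_residuePartitionsAvoiding : 0 ∈ residuePartitionsAvoiding R S 0 := by
  simp [residuePartitionsAvoiding]

variable {R S}

theorem pair_mem_residuePartitionsAvoiding (hSR : S < R) (k : ℕ) :
    {R + S, (k + 1) * R + (R - S)} ∈ residuePartitionsAvoiding R S (R * (k + 3)) := by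
  have hR_le : R ≤ (k + 1) * R := Nat.le_mul_of_pos_left R k.succ_pos
  refine ⟨?_, ?_, ?_⟩
  · rw [Multiset.insert_eq_cons, Multiset.sum_cons, Multiset.sum_singleton]
    push_cast [Nat.cast_sub hSR.le]
    ring
  · intro a ha
    rw [Multiset.insert_eq_cons, Multiset.mem_cons, Multiset.mem_singleton] at ha
    rcases ha with rfl | rfl
    · exact ⟨by omega, .inl (Nat.add_mod_left R S)⟩
    · exact ⟨by omega, .inr (Nat.mul_add_mod_self_right (k + 1) R (R - S))⟩
  · rw [Multiset.insert_eq_cons, Multiset.mem_cons, Multiset.mem_singleton]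
    omega

theorem residuePartitionsAvoiding_mul_nonempty (hSR : S < R) {m : ℕ} (hm : m = 0 ∨ 3 ≤ m) :
    (residuePartitionsAvoiding R S (R * m)).Nonempty := by
  rcases hm with rfl | hm
  · rw [Nat.cast_zero, mul_zero]
    exact ⟨0, zero_mem_residuePartitionsAvoiding R S⟩
  · obtain ⟨k, rfl⟩ := Nat.exists_eq_add_of_le' hm
    rw [Nat.cast_add, Nat.cast_ofNat]
    exact ⟨_, pair_mem_residuePartitionsAvoiding hSR k⟩

theorem one_le_card_residuePartitionsAvoiding_mul (hSR : S < R) {m : ℕ} (hm : m = 0 ∨ 3 ≤ m) :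
    1 ≤ Nat.card (residuePartitionsAvoiding R S (R * m)) := by
  have := (finite_residuePartitionsAvoiding R S (R * m)).to_subtype
  have := (residuePartitionsAvoiding_mul_nonempty hSR hm).to_subtype
  exact Nat.card_pos

end Partitions

theorem pentagonal_eq_zero_or_five_le_of_even {i : ℤ} (hi : Even i) :
    pentagonal i = 0 ∨ 5 ≤ pentagonal i := by
  obtain ⟨j, rfl⟩ := hi
  have hpent : (pentagonal (j + j) : ℤ) = j * (6 * j - 1) := by
    linarith [two_mul_natCast_pentagonal (j + j)]
  rcases lt_trichotomy j 0 with hj | rfl | hj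
  · exact .inr (by zify; nlinarith)
  · exact .inl (by simpa using hpent)
  · exact .inr (by zify; nlinarith)

theorem exists_even_eq_mul_pentagonal_of_pos {R : ℤ} {ρ : ℤ → ℤ}
    (hρ1 : ∀ i : ℤ, ρ (R * (i * (3 * i - 1) / 2)) = (-1) ^ i.natAbs)
    (hρ2 : ∀ m : ℤ, (∀ i : ℤ, m ≠ R * (i * (3 * i - 1) / 2)) → ρ m = 0)
    {n : ℤ} (hn : 0 < ρ n) : ∃ i : ℤ, Even i ∧ n = R * pentagonal i ∧ ρ n = 1 := by
  obtain ⟨i, rfl⟩ : ∃ i : ℤ, n = R * (i * (3 * i - 1) / 2) := by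
    by_contra! h
    exact hn.ne' (hρ2 n h)
  rw [hρ1] at hn ⊢
  have hi : Even i := by
    by_contra hodd
    rw [(Int.natAbs_odd.mpr (Int.not_even_iff_odd.mp hodd)).neg_one_pow] at hn
    exact absurd hn (by decide)
  exact ⟨i, hi, by rw [natCast_pentagonal], (Int.natAbs_even.mpr hi).neg_one_pow⟩

theorem stmt0_general {R S : ℕ} (hSR : S < R) {ρ : ℤ → ℤ}
    (hρ1 : ∀ i : ℤ, ρ ((R : ℤ) * (i * (3 * i - 1) / 2)) = (-1) ^ i.natAbs)
    (hρ2 : ∀ m : ℤ, (∀ i : ℤ, m ≠ (R : ℤ) * (i * (3 * i - 1) / 2)) → ρ m = 0) (n : ℤ) :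
    ρ n ≤ Nat.card (residuePartitionsAvoiding R S n) := by
  rcases le_or_gt (ρ n) 0 with hnonpos | hpos
  · exact hnonpos.trans (Int.natCast_nonneg _)
  obtain ⟨i, hi, rfl, hone⟩ := exists_even_eq_mul_pentagonal_of_pos hρ1 hρ2 hpos
  rw [hone]
  exact_mod_cast one_le_card_residuePartitionsAvoiding_mul hSR
    ((pentagonal_eq_zero_or_five_le_of_even hi).imp_right (le_trans (by decide)))

/-- Case k = 1 of the truncated JTP conjecture: the number of partitions of `n`
with parts ≡ ±S (mod R) in which `S` does not occur is at least `ρ_R(n)`.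
Here `ρ` is the function with `ρ(R·i(3i−1)/2) = (−1)^i` and `ρ = 0` elsewhere,
and a partition is encoded as a multiset of positive parts. -/
theorem stmt0 (R S : ℕ) (hR : 2 ≤ R) (hS : 1 ≤ S) (hSR : S < R) (h2S : 2 * S ≠ R)
    (ρ : ℤ → ℤ)
    (hρ1 : ∀ i : ℤ, ρ ((R : ℤ) * (i * (3 * i - 1) / 2)) = (-1) ^ i.natAbs)
    (hρ2 : ∀ m : ℤ, (∀ i : ℤ, m ≠ (R : ℤ) * (i * (3 * i - 1) / 2)) → ρ m = 0)
    (n : ℤ) (hn : 0 ≤ n) :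
    ρ n ≤ (Nat.card {s : Multiset ℕ // (s.sum : ℤ) = n ∧
      (∀ a ∈ s, 0 < a ∧ (a % R = S % R ∨ a % R = (R - S) % R)) ∧ S ∉ s} : ℤ) :=
  stmt0_general hSR hρ1 hρ2 n
end

section
/- Let R and S be integers with R ≥ 2, 1 ≤ S < R and 2S ≠ R, and let n ≥ 0. Then y_{S,R,1}(n) − y_{S,R,0}(n) + ρ_R(n) ≥ 0. (This is the case k = 2 of the truncated Jacobi Triple Product conjecture: the coefficient a_{S,R,2}(n) is non-negative.) -/
/-- `y R S k n` is the number of partitions of `n − (k(k+1)R/2 − kS)` into parts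
congruent to `S` or `R−S` mod `R` in which the part `S` occurs at most `2k` times
(`0` if `n − (k(k+1)R/2 − kS) < 0`). A partition is a multiset of positive parts. -/
noncomputable def y (R S k : ℕ) (n : ℤ) : ℕ :=
  Nat.card {s : Multiset ℕ //
    (s.sum : ℤ) = n - ((k : ℤ) * (k + 1) * R / 2 - k * S) ∧
    (∀ a ∈ s, 0 < a ∧ (a % R = S % R ∨ a % R = (R - S) % R)) ∧
    s.count S ≤ 2 * k}

/-!
For `n ≠ 0` the partitions of `n` without part `S` inject into the partitions of `n - (R - S)`
with at most two parts `S`: delete a part `R - S` if there is one; otherwise replace a part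
`R + S` by `S, S` if there is one; otherwise every part exceeds `R`, and the least part `p` is
replaced by `S, p - R`. The number of parts `S` in the result (0, 2 or 1) tells which rule was
applied, so the map can be undone. When `n` is a positive multiple of `R` the map misses a
partition, which makes up for a possible value `-1` of `ρ n`; the value `n = 0` is compensated by
`ρ 0 = 1`.
-/

variable {R S : ℕ} {s u : Multiset ℕ}

/-- The parts allowed in the partitions counted by `y R S k`: the positive integers congruent to
`±S` modulo `R`. The residue `-S` is written `R - S`, so this is meant for `S < R`. -/
def IsPart (R S a : ℕ) : Prop :=
  0 < a ∧ (a % R = S % R ∨ a % R = (R - S) % R)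

theorem isPart_self (hS : 0 < S) : IsPart R S S :=
  ⟨hS, .inl rfl⟩

theorem isPart_sub (hSR : S < R) : IsPart R S (R - S) :=
  ⟨Nat.sub_pos_of_lt hSR, .inr rfl⟩

theorem isPart_add (hS : 0 < S) : IsPart R S (R + S) :=
  ⟨by omega, .inl (Nat.add_mod_left R S)⟩

theorem IsPart.sub_right {a : ℕ} (ha : IsPart R S a) (hRa : R < a) : IsPart R S (a - R) :=
  ⟨Nat.sub_pos_of_lt hRa, by simpa only [← Nat.mod_eq_sub_mod hRa.le] using ha.2⟩

theorem IsPart.lt_of_ne {a : ℕ} (hS : 0 < S) (hSR : S < R) (ha : IsPart R S a) (haS : a ≠ S)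
    (haRS : a ≠ R - S) : R < a := by
  have hmod := ha.2
  rw [Nat.mod_eq_of_lt hSR, Nat.mod_eq_of_lt (by omega : R - S < R)] at hmod
  rcases lt_trichotomy a R with h | rfl | h
  · rw [Nat.mod_eq_of_lt h] at hmod
    omega
  · rw [Nat.mod_self] at hmod
    omega
  · exact h

/-- The partitions of `n` into parts congruent to `±S` modulo `R` in which the part `S` occurs at
most `c` times. The integer `n` may be negative, in which case there are none. -/
def partitions (R S c : ℕ) (n : ℤ) : Set (Multiset ℕ) :=
  {s | (s.sum : ℤ) = n ∧ (∀ a ∈ s, IsPart R S a) ∧ s.count S ≤ c}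

theorem y_eq_ncard (R S k : ℕ) (n : ℤ) :
    y R S k n = (partitions R S (2 * k) (n - ((k : ℤ) * (k + 1) * R / 2 - k * S))).ncard :=
  rfl

theorem y_zero_eq_ncard (R S : ℕ) (n : ℤ) : y R S 0 n = (partitions R S 0 n).ncard := by
  simp [y_eq_ncard]

theorem y_one_eq_ncard (R S : ℕ) (n : ℤ) : y R S 1 n = (partitions R S 2 (n - (R - S))).ncard := by
  simp [y_eq_ncard, one_add_one_eq_two]

theorem finite_partitions (R S c : ℕ) (n : ℤ) : (partitions R S c n).Finite := by
  refine (Set.finite_range (Nat.Partition.parts : n.toNat.Partition → Multiset ℕ)).subset ?_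
  rintro s ⟨hsum, hpart, -⟩
  exact ⟨⟨s, fun ha => (hpart _ ha).1, by omega⟩, rfl⟩

theorem partitions_zero (R S c : ℕ) : partitions R S c 0 = {0} := by
  ext s
  constructor
  · rintro ⟨hsum, hpart, -⟩
    refine Multiset.eq_zero_of_forall_notMem fun a ha => ?_
    have := Multiset.le_sum_of_mem ha
    have := (hpart a ha).1
    omega
  · rintro rfl
    simp [partitions]

theorem notMem_of_mem_partitions {n : ℤ} (hs : s ∈ partitions R S 0 n) : S ∉ s :=
  Multiset.count_eq_zero.1 (Nat.le_zero.1 hs.2.2)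

theorem ne_zero_of_mem_partitions {c : ℕ} {n : ℤ} (hn : n ≠ 0) (hs : s ∈ partitions R S c n) :
    s ≠ 0 := by
  rintro rfl
  exact hn (by simpa using hs.1.symm)

/-- The least part of a partition, with the value `0` on the empty partition. -/
noncomputable def leastPart (s : Multiset ℕ) : ℕ :=
  sInf {a | a ∈ s}

theorem leastPart_mem (hs : s ≠ 0) : leastPart s ∈ s :=
  Nat.sInf_mem (Multiset.exists_mem_of_ne_zero hs)

theorem leastPart_le {a : ℕ} (ha : a ∈ s) : leastPart s ≤ a :=
  Nat.sInf_le ha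

theorem leastPart_cons {p : ℕ} (hp : ∀ a ∈ u, p ≤ a) : leastPart (p ::ₘ u) = p := by
  refine le_antisymm (leastPart_le (Multiset.mem_cons_self p u)) ?_
  rcases Multiset.mem_cons.1 (leastPart_mem (Multiset.cons_ne_zero (a := p) (m := u))) with h | h
  · exact h.ge
  · exact hp _ h

/-- The injection from the partitions of `n` without part `S` into the partitions of
`n - (R - S)` with at most two parts `S`. -/
noncomputable def shrink (R S : ℕ) (s : Multiset ℕ) : Multiset ℕ :=
  if R - S ∈ s then s.erase (R - S)
  else if R + S ∈ s then S ::ₘ S ::ₘ s.erase (R + S)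
  else S ::ₘ (leastPart s - R) ::ₘ s.erase (leastPart s)

theorem shrink_cons_sub (R S : ℕ) (u : Multiset ℕ) : shrink R S ((R - S) ::ₘ u) = u := by
  simp [shrink]

theorem shrink_cons_add (hsub : R - S ∉ (R + S) ::ₘ u) :
    shrink R S ((R + S) ::ₘ u) = S ::ₘ S ::ₘ u := by
  simp [shrink, hsub]

theorem shrink_cons_least {p : ℕ} (hsub : R - S ∉ p ::ₘ u) (hadd : R + S ∉ p ::ₘ u)
    (hp : ∀ a ∈ u, p ≤ a) : shrink R S (p ::ₘ u) = S ::ₘ (p - R) ::ₘ u := by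
  simp [shrink, hsub, hadd, leastPart_cons hp]

theorem eq_cons_sub_or_add_or_least (hS : 0 < S) (hSR : S < R) (hs : ∀ a ∈ s, IsPart R S a)
    (hSs : S ∉ s) (hs0 : s ≠ 0) :
    (∃ u, s = (R - S) ::ₘ u ∧ S ∉ u) ∨
      (∃ u, s = (R + S) ::ₘ u ∧ S ∉ u ∧ R - S ∉ s) ∨
      ∃ p u, s = p ::ₘ u ∧ S ∉ u ∧ R < p ∧ (∀ a ∈ u, p ≤ a) ∧ R - S ∉ s ∧ R + S ∉ s := by
  have exists_cons {a : ℕ} (ha : a ∈ s) : ∃ u, s = a ::ₘ u ∧ S ∉ u := by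
    obtain ⟨u, rfl⟩ := Multiset.exists_cons_of_mem ha
    exact ⟨u, rfl, mt Multiset.mem_cons_of_mem hSs⟩
  by_cases hsub : R - S ∈ s
  · exact .inl (exists_cons hsub)
  by_cases hadd : R + S ∈ s
  · obtain ⟨u, hu, hSu⟩ := exists_cons hadd
    exact .inr (.inl ⟨u, hu, hSu, hsub⟩)
  have hmem := leastPart_mem hs0
  obtain ⟨u, hu, hSu⟩ := exists_cons hmem
  have hRp : R < leastPart s :=
    (hs _ hmem).lt_of_ne hS hSR (ne_of_mem_of_not_mem hmem hSs) (ne_of_mem_of_not_mem hmem hsub)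
  have hle (a) (ha : a ∈ u) : leastPart s ≤ a :=
    leastPart_le (hu ▸ Multiset.mem_cons_of_mem ha)
  exact .inr (.inr ⟨leastPart s, u, hu, hSu, hRp, hle, hsub, hadd⟩)

theorem shrink_mem_partitions {n : ℤ} (hS : 0 < S) (hSR : S < R) (hn : n ≠ 0)
    (hs : s ∈ partitions R S 0 n) : shrink R S s ∈ partitions R S 2 (n - (R - S)) := by
  have hSs := notMem_of_mem_partitions hs
  have hs0 := ne_zero_of_mem_partitions hn hs
  obtain ⟨hsum, hpart, -⟩ := hs
  rcases eq_cons_sub_or_add_or_least hS hSR hpart hSs hs0 with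
    ⟨u, rfl, hSu⟩ | ⟨u, rfl, hSu, hsub⟩ | ⟨p, u, rfl, hSu, hRp, hp, hsub, hadd⟩
  all_goals
    rw [Multiset.sum_cons] at hsum
    rw [Multiset.forall_mem_cons] at hpart
    have hcount := Multiset.count_eq_zero_of_notMem hSu
  · rw [shrink_cons_sub]
    exact ⟨by omega, hpart.2, by omega⟩
  · rw [shrink_cons_add hsub]
    refine ⟨?_, ?_, by simp [hcount]⟩
    · simp only [Multiset.sum_cons]
      omega
    · simpa only [Multiset.forall_mem_cons] using ⟨isPart_self hS, isPart_self hS, hpart.2⟩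
  · rw [shrink_cons_least hsub hadd hp]
    refine ⟨?_, ?_, ?_⟩
    · simp only [Multiset.sum_cons]
      omega
    · simpa only [Multiset.forall_mem_cons] using
        ⟨isPart_self hS, hpart.1.sub_right hRp, hpart.2⟩
    · simp only [Multiset.count_cons]
      split_ifs <;> omega

/-- The left inverse of `shrink R S` on nonempty partitions without part `S`. -/
noncomputable def grow (R S : ℕ) (t : Multiset ℕ) : Multiset ℕ :=
  if S ∉ t then (R - S) ::ₘ t
  else if S ∈ t.erase S then (R + S) ::ₘ (t.erase S).erase S
  else (leastPart (t.erase S) + R) ::ₘ (t.erase S).erase (leastPart (t.erase S))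

theorem grow_shrink (hS : 0 < S) (hSR : S < R) (hs : ∀ a ∈ s, IsPart R S a) (hSs : S ∉ s)
    (hs0 : s ≠ 0) : grow R S (shrink R S s) = s := by
  rcases eq_cons_sub_or_add_or_least hS hSR hs hSs hs0 with
    ⟨u, rfl, hSu⟩ | ⟨u, rfl, -, hsub⟩ | ⟨p, u, rfl, hSu, hRp, hp, hsub, hadd⟩
  · rw [shrink_cons_sub, grow, if_pos hSu]
  · rw [shrink_cons_add hsub]
    simp [grow]
  · have hpRS : R + S ≠ p := (not_or.1 (mt Multiset.mem_cons.2 hadd)).1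
    have hne : S ≠ p - R := by omega
    have hleast : leastPart ((p - R) ::ₘ u) = p - R :=
      leastPart_cons fun a ha => (Nat.sub_le p R).trans (hp a ha)
    rw [shrink_cons_least hsub hadd hp]
    simp [grow, hne, hSu, hleast, Nat.sub_add_cancel hRp.le]

theorem injOn_shrink {n : ℤ} (hS : 0 < S) (hSR : S < R) (hn : n ≠ 0) :
    Set.InjOn (shrink R S) (partitions R S 0 n) := by
  have hleft : Set.LeftInvOn (grow R S) (shrink R S) (partitions R S 0 n) := fun s hs =>
    grow_shrink hS hSR hs.2.1 (notMem_of_mem_partitions hs) (ne_zero_of_mem_partitions hn hs)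
  exact hleft.injOn

theorem y_zero_le_y_one {n : ℤ} (hS : 0 < S) (hSR : S < R) (hn : n ≠ 0) :
    y R S 0 n ≤ y R S 1 n := by
  rw [y_zero_eq_ncard, y_one_eq_ncard]
  exact Set.ncard_le_ncard_of_injOn (shrink R S) (fun s => shrink_mem_partitions hS hSR hn)
    (injOn_shrink hS hSR hn) (finite_partitions ..)

theorem notMem_shrink_or_shrink_eq (hS : 0 < S) (hSR : S < R) (hs : ∀ a ∈ s, IsPart R S a)
    (hSs : S ∉ s) (hs0 : s ≠ 0) :
    S ∉ shrink R S s ∨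
      (∃ u, shrink R S s = S ::ₘ S ::ₘ u ∧ R - S ∉ u) ∨
      ∃ q u, shrink R S s = S ::ₘ q ::ₘ u ∧ q ≠ S ∧ S ∉ u ∧ R - S ∉ u ∧ R + S ∉ u := by
  rcases eq_cons_sub_or_add_or_least hS hSR hs hSs hs0 with
    ⟨u, rfl, hSu⟩ | ⟨u, rfl, -, hsub⟩ | ⟨p, u, rfl, hSu, hRp, hp, hsub, hadd⟩
  · exact .inl (by rwa [shrink_cons_sub])
  · exact .inr (.inl ⟨u, shrink_cons_add hsub, mt Multiset.mem_cons_of_mem hsub⟩)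
  · have hpRS : R + S ≠ p := (not_or.1 (mt Multiset.mem_cons.2 hadd)).1
    exact .inr (.inr ⟨p - R, u, shrink_cons_least hsub hadd hp, by omega, hSu,
      mt Multiset.mem_cons_of_mem hsub, mt Multiset.mem_cons_of_mem hadd⟩)

/-- A partition of `m * R + S` that, for `2 * S ≠ R`, has at most two parts `S` and is not of the
form `shrink R S s`. -/
def unreached (R S : ℕ) : ℕ → Multiset ℕ
  | 0 => {S}
  | 1 => {S, S, R - S}
  | m + 2 => (R - S) ::ₘ (R + S) ::ₘ unreached R S m

theorem self_mem_unreached (R S m : ℕ) : S ∈ unreached R S m := by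
  induction m using Nat.twoStepInduction with
  | zero => simp [unreached]
  | one => simp [unreached]
  | more m ih _ => simp [unreached, ih]

theorem sub_mem_unreached_succ (R S m : ℕ) : R - S ∈ unreached R S (m + 1) := by
  rcases m with _ | m <;> simp [unreached]

theorem sum_unreached (hSR : S ≤ R) (m : ℕ) : (unreached R S m).sum = m * R + S := by
  induction m using Nat.twoStepInduction with
  | zero => simp [unreached]
  | one =>
    simp only [unreached, Multiset.insert_eq_cons, Multiset.sum_cons, Multiset.sum_singleton]
    omega
  | more m ih _ =>
    simp only [unreached, Multiset.sum_cons, ih, add_mul]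
    omega

theorem isPart_of_mem_unreached (hS : 0 < S) (hSR : S < R) (m : ℕ) :
    ∀ a ∈ unreached R S m, IsPart R S a := by
  induction m using Nat.twoStepInduction with
  | zero => simp [unreached, isPart_self hS]
  | one => simp [unreached, isPart_self hS, isPart_sub hSR]
  | more m ih _ =>
    simpa only [unreached, Multiset.forall_mem_cons] using ⟨isPart_sub hSR, isPart_add hS, ih⟩

theorem count_unreached_le (hSR : S < R) (h2S : 2 * S ≠ R) (m : ℕ) :
    (unreached R S m).count S ≤ 2 := by
  have hsub : S ≠ R - S := by omega
  have hadd : S ≠ R + S := by omega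
  induction m using Nat.twoStepInduction with
  | zero => simp [unreached]
  | one => simp [unreached, hsub]
  | more m ih _ =>
    simpa only [unreached, Multiset.count_cons_of_ne hsub, Multiset.count_cons_of_ne hadd] using ih

theorem unreached_mem_partitions (hS : 0 < S) (hSR : S < R) (h2S : 2 * S ≠ R) (m : ℕ) :
    unreached R S m ∈ partitions R S 2 (m * R + S) :=
  ⟨by simp [sum_unreached hSR.le], isPart_of_mem_unreached hS hSR m,
    count_unreached_le hSR h2S m⟩

theorem shrink_ne_unreached (hS : 0 < S) (hSR : S < R) (h2S : 2 * S ≠ R)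
    (hs : ∀ a ∈ s, IsPart R S a) (hSs : S ∉ s) (hs0 : s ≠ 0) (m : ℕ) :
    shrink R S s ≠ unreached R S m := by
  intro h
  have hsub : R - S ≠ S := by omega
  have hR : R ≠ 0 := by omega
  rcases notMem_shrink_or_shrink_eq hS hSR hs hSs hs0 with
    hSt | ⟨u, ht, hsubu⟩ | ⟨q, u, ht, hqS, hSu, hsubu, haddu⟩
  · exact hSt (h ▸ self_mem_unreached R S m)
  · rcases m with _ | m
    · simpa [unreached, ht] using congrArg Multiset.card h
    · have hmem : R - S ∈ shrink R S s := h ▸ sub_mem_unreached_succ R S m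
      simp [ht, hsub, hsubu] at hmem
  · rcases m with _ | _ | m
    · simpa [unreached, ht] using congrArg Multiset.card h
    · have hcount := congrArg (Multiset.count S) h
      simp [unreached, ht, hqS.symm, hSu, hsub.symm] at hcount
    · have hqsub : R - S = q := by
        have hmem : R - S ∈ shrink R S s := h ▸ sub_mem_unreached_succ R S (m + 1)
        simpa [ht, hsub, hsubu] using hmem
      have hqadd : R + S = q := by
        have hmem : R + S ∈ shrink R S s := by simp [h, unreached]
        simpa [ht, haddu, hR] using hmem
      omega

theorem y_zero_lt_y_one {n : ℤ} (hS : 0 < S) (hSR : S < R) (h2S : 2 * S ≠ R) (hn : 0 < n)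
    (hdvd : (R : ℤ) ∣ n) : y R S 0 n < y R S 1 n := by
  obtain ⟨m, rfl⟩ : ∃ m : ℕ, n = R * (m + 1) := by
    obtain ⟨k, rfl⟩ := hdvd
    have hk : 0 < k := pos_of_mul_pos_right hn (by positivity)
    exact ⟨(k - 1).toNat, by grind⟩
  rw [y_zero_eq_ncard, y_one_eq_ncard, ← (injOn_shrink hS hSR hn.ne').ncard_image]
  refine Set.ncard_lt_ncard (Set.ssubset_iff_exists.2 ⟨?_, unreached R S m, ?_, ?_⟩)
    (finite_partitions ..)
  · exact Set.image_subset_iff.2 fun s => shrink_mem_partitions hS hSR hn.ne'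
  · convert unreached_mem_partitions hS hSR h2S m using 1
    congr 1
    ring
  · rintro ⟨s, hs, h⟩
    exact shrink_ne_unreached hS hSR h2S hs.2.1 (notMem_of_mem_partitions hs)
      (ne_zero_of_mem_partitions hn.ne' hs) m h

/-- Case k = 2 of the truncated JTP conjecture: `y_{S,R,1}(n) − y_{S,R,0}(n) + ρ_R(n) ≥ 0`. -/
theorem stmt1 (R S : ℕ) (hR : 2 ≤ R) (hS : 1 ≤ S) (hSR : S < R) (h2S : 2 * S ≠ R)
    (ρ : ℤ → ℤ)
    (hρ1 : ∀ i : ℤ, ρ ((R : ℤ) * (i * (3 * i - 1) / 2)) = (-1) ^ i.natAbs)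
    (hρ2 : ∀ m : ℤ, (∀ i : ℤ, m ≠ (R : ℤ) * (i * (3 * i - 1) / 2)) → ρ m = 0)
    (n : ℤ) (hn : 0 ≤ n) :
    0 ≤ (y R S 1 n : ℤ) - (y R S 0 n : ℤ) + ρ n := by
  by_cases hn0 : n = 0
  · subst hn0
    have hρ0 : ρ 0 = 1 := by simpa using hρ1 0
    have hy0 : y R S 0 0 = 1 := by
      rw [y_zero_eq_ncard, partitions_zero, Set.ncard_singleton]
    omega
  by_cases hpent : ∃ i : ℤ, n = R * (i * (3 * i - 1) / 2)
  · obtain ⟨i, hi⟩ := hpent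
    have hlt : y R S 0 n < y R S 1 n :=
      y_zero_lt_y_one hS hSR h2S (hn.lt_of_ne' hn0) ⟨_, hi⟩
    have hρ : ρ n = 1 ∨ ρ n = -1 := by
      rw [hi, hρ1]
      exact neg_one_pow_eq_or ℤ i.natAbs
    omega
  · have hle : y R S 0 n ≤ y R S 1 n := y_zero_le_y_one hS hSR hn0
    have hρ : ρ n = 0 := hρ2 n (not_exists.1 hpent)
    omega
end

section
/- Let R and S be integers with R ≥ 2, 1 ≤ S < R and 2S ≠ R, and let n ≥ 0. Then y_{S,R,2}(n) − y_{S,R,1}(n) + y_{S,R,0}(n) − ρ_R(n) ≥ 0. (This is the case k = 3 of the truncated Jacobi Triple Product conjecture: the coefficient a_{S,R,3}(n) is non-negative.) -/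
/-!
Let `c_k` count the partitions into parts `j * R + S` and `j * R - S` with `j ≥ k`. Choosing the
multiplicity of the part `S` writes `y R S k n` as a sum of `2 * k + 1` values of `c₁`, and the
relation between `c₁` and `c₂` turns `y R S 2 n - y R S 1 n + y R S 0 n` into
`c₂ n - c₂ (n - R) + ∑ ε ∈ {S, 0, -S}, (c₁ (n - 4 * R + ε) - c₂ (n - 2 * R + ε))`.

Split both counts according to the numbers `r` and `s` of parts congruent to `S` and to `-S`
modulo `R`; by Euler, each class is counted by a coefficient of `1 / ((Q; Q)_r (Q; Q)_s)`, where
`Q = q ^ R`. For `r + s ≥ 2` the contribution of `(r, s)` is non-negative, because these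
coefficients increase along multiples of `R`. The deficits at `r + s ≤ 1` are paid for by the pairs
`(2, 0)`, `(0, 2)` and `(1, 1)`, and what is left dominates `ρ`, because the generalized pentagonal
numbers other than `0`, `1` and `2` are at least `5`.
-/

namespace TruncatedJTP

open Finset

section PartitionCount

/-- The partitions of `w`, as multisets of parts, all of whose parts are positive and lie in `B`.
The size `w` is an integer so that it can be shifted freely; there are no partitions of `w < 0`. -/
def partitionsIn (B : Set ℕ) (w : ℤ) : Set (Multiset ℕ) :=
  {l | (l.sum : ℤ) = w ∧ ∀ a ∈ l, 0 < a ∧ a ∈ B}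

/-- The number of partitions of `w` into positive parts from `B`, as an integer because these
numbers get subtracted. -/
noncomputable def partitionCount (B : Set ℕ) (w : ℤ) : ℤ := (partitionsIn B w).ncard

variable {B : Set ℕ} {a : ℕ}

theorem finite_partitionsIn (B : Set ℕ) (w : ℤ) : (partitionsIn B w).Finite := by
  refine (Set.finite_range fun p : w.toNat.Partition => p.parts).subset ?_
  rintro l ⟨hsum, hparts⟩
  exact ⟨⟨l, fun ha => (hparts _ ha).1, by omega⟩, rfl⟩

theorem sep_le_count_eq_image (ha : 0 < a) (haB : a ∈ B) (w : ℤ) (c : ℕ) :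
    {l ∈ partitionsIn B w | c ≤ l.count a} =
      (Multiset.replicate c a + ·) '' partitionsIn B (w - c * a) := by
  ext l
  constructor
  · rintro ⟨⟨hsum, hparts⟩, hc⟩
    obtain ⟨u, rfl⟩ := Multiset.le_iff_exists_add.1 (Multiset.le_count_iff_replicate_le.1 hc)
    refine ⟨u, ⟨?_, fun b hb => hparts b (Multiset.mem_add.2 (.inr hb))⟩, rfl⟩
    simp only [Multiset.sum_add, Multiset.sum_replicate, smul_eq_mul, Nat.cast_add,
      Nat.cast_mul] at hsum
    linarith
  · rintro ⟨u, ⟨hsum, hparts⟩, rfl⟩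
    refine ⟨⟨by simp [hsum], fun b hb => ?_⟩, by simp⟩
    rcases Multiset.mem_add.1 hb with hb | hb
    · exact Multiset.eq_of_mem_replicate hb ▸ ⟨ha, haB⟩
    · exact hparts b hb

theorem ncard_sep_count_lt (ha : 0 < a) (haB : a ∈ B) (w : ℤ) (c : ℕ) :
    ({l ∈ partitionsIn B w | l.count a < c}.ncard : ℤ) =
      partitionCount B w - partitionCount B (w - c * a) := by
  have hsplit := Set.ncard_inter_add_ncard_sdiff_eq_ncard (partitionsIn B w)
    {l | c ≤ l.count a} (finite_partitionsIn B w)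
  have hge : partitionsIn B w ∩ {l | c ≤ l.count a} = _ := sep_le_count_eq_image ha haB w c
  have hlt : partitionsIn B w \ {l | c ≤ l.count a} =
      {l ∈ partitionsIn B w | l.count a < c} := by
    ext l
    simp
  rw [hge, hlt, Set.ncard_image_of_injective _ (add_right_injective _)] at hsplit
  unfold partitionCount
  omega

theorem partitionCount_sdiff_singleton (ha : 0 < a) (haB : a ∈ B) (w : ℤ) :
    partitionCount (B \ {a}) w = partitionCount B w - partitionCount B (w - a) := by
  have hset : partitionsIn (B \ {a}) w = {l ∈ partitionsIn B w | l.count a < 1} := by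
    ext l
    simp only [partitionsIn, Set.mem_ofPred_eq, Set.mem_sdiff, Set.mem_singleton_iff,
      Nat.lt_one_iff, Multiset.count_eq_zero]
    grind
  rw [partitionCount, hset, ncard_sep_count_lt ha haB w 1, Nat.cast_one, one_mul]

theorem ncard_sep_count_lt_eq_sum (ha : 0 < a) (haB : a ∈ B) (w : ℤ) (c : ℕ) :
    ({l ∈ partitionsIn B w | l.count a < c}.ncard : ℤ) =
      ∑ i ∈ range c, partitionCount (B \ {a}) (w - i * a) := by
  have htelescope := sum_range_sub' (fun i : ℕ => partitionCount B (w - i * a)) c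
  rw [ncard_sep_count_lt ha haB w c]
  simp only [Nat.cast_zero, zero_mul, sub_zero] at htelescope
  rw [← htelescope]
  refine sum_congr rfl fun i _ => ?_
  rw [partitionCount_sdiff_singleton ha haB, sub_sub w]
  congr 3
  push_cast
  ring

end PartitionCount

section Progressions

/-- The union of the arithmetic progressions with difference `R` starting at `a` and at `b`. -/
def progressions (R a b : ℕ) : Set ℕ :=
  Set.range (fun j => a + j * R) ∪ Set.range (fun j => b + j * R)

variable {R a b : ℕ}

theorem progressions_comm (R a b : ℕ) : progressions R a b = progressions R b a :=
  Set.union_comm _ _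

theorem left_mem_progressions (R a b : ℕ) : a ∈ progressions R a b :=
  .inl ⟨0, by simp⟩

theorem progressions_eq_setOf_mod (ha : a < R) (hb : b < R) :
    progressions R a b = {x | x % R = a % R ∨ x % R = b % R} := by
  have hrange {c : ℕ} (hc : c < R) (x : ℕ) : (∃ j, c + j * R = x) ↔ x % R = c % R := by
    constructor
    · rintro ⟨j, rfl⟩
      exact Nat.add_mul_mod_self_right c j R
    · intro hx
      rw [Nat.mod_eq_of_lt hc] at hx
      exact ⟨x / R, by rw [← hx, Nat.mod_add_div']⟩
  ext x
  exact or_congr (hrange ha x) (hrange hb x)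

theorem add_mul_ne_add_mul (hab : ¬ a ≡ b [MOD R]) (i j : ℕ) : a + i * R ≠ b + j * R := by
  intro h
  apply hab
  simpa [Nat.ModEq] using congrArg (· % R) h

theorem progressions_sdiff_left (hR : 0 < R) (hab : ¬ a ≡ b [MOD R]) :
    progressions R a b \ {a} = progressions R (a + R) b := by
  ext x
  constructor
  · rintro ⟨⟨j, rfl⟩ | hx, hne⟩
    · obtain _ | j := j
      · simp at hne
      · exact .inl ⟨j, by ring⟩
    · exact .inr hx
  · rintro (⟨j, rfl⟩ | ⟨j, rfl⟩)
    · exact ⟨.inl ⟨j + 1, by ring⟩, by simp; omega⟩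
    · exact ⟨.inr ⟨j, rfl⟩, fun h => add_mul_ne_add_mul hab 0 j (by simpa using h.symm)⟩

theorem not_modEq_add_left (hab : ¬ a ≡ b [MOD R]) : ¬ a + R ≡ b [MOD R] := by
  simpa [Nat.ModEq] using hab

theorem partitionCount_progressions_add_left (hR : 0 < R) (ha : 0 < a) (hab : ¬ a ≡ b [MOD R])
    (w : ℤ) :
    partitionCount (progressions R (a + R) b) w =
      partitionCount (progressions R a b) w - partitionCount (progressions R a b) (w - a) := by
  rw [← progressions_sdiff_left hR hab,
    partitionCount_sdiff_singleton ha (left_mem_progressions R a b)]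

theorem partitionCount_progressions_add_add (hR : 0 < R) (ha : 0 < a) (hb : 0 < b)
    (hab : ¬ a ≡ b [MOD R]) (w : ℤ) :
    partitionCount (progressions R (a + R) (b + R)) w =
      partitionCount (progressions R a b) w - partitionCount (progressions R a b) (w - a)
        - partitionCount (progressions R a b) (w - b)
        + partitionCount (progressions R a b) (w - a - b) := by
  have hba : ¬ b ≡ a + R [MOD R] := fun h => not_modEq_add_left hab h.symm
  rw [progressions_comm, partitionCount_progressions_add_left hR hb hba, progressions_comm,
    partitionCount_progressions_add_left hR ha hab,
    partitionCount_progressions_add_left hR ha hab, sub_right_comm w (b : ℤ)]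
  ring

end Progressions

section PairCount

/-- The pairs of partitions with at most `r` and at most `s` parts whose sizes add up to `w / R`.
A partition with at most `r` parts is encoded as a multiset of exactly `r` natural numbers. -/
def partitionPairs (R r s : ℕ) (w : ℤ) : Set (Multiset ℕ × Multiset ℕ) :=
  {p | p.1.card = r ∧ p.2.card = s ∧ (R : ℤ) * (p.1.sum + p.2.sum) = w}

/-- The coefficient of `q ^ w` in `1 / ((Q; Q)_r (Q; Q)_s)`, where `Q = q ^ R`: the number of
pairs of partitions with at most `r` and at most `s` parts whose sizes add up to `w / R`. -/
noncomputable def pairCount (R r s : ℕ) (w : ℤ) : ℤ := (partitionPairs R r s w).ncard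

variable {R r s : ℕ}

theorem le_card_nsmul_range (l : Multiset ℕ) {m : ℕ} (hm : l.sum ≤ m) :
    l ≤ l.card • Multiset.range (m + 1) := by
  refine Multiset.le_iff_count.2 fun a => ?_
  by_cases ha : a ∈ l
  · have ham : a ≤ m := (Multiset.single_le_sum (by simp) a ha).trans hm
    rw [Multiset.count_nsmul, Multiset.count_eq_one_of_mem (Multiset.nodup_range _)
      (Multiset.mem_range.2 (by omega)), mul_one]
    exact Multiset.count_le_card a l
  · simp [Multiset.count_eq_zero_of_notMem ha]

theorem finite_partitionPairs (hR : 0 < R) (r s : ℕ) (w : ℤ) :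
    (partitionPairs R r s w).Finite := by
  refine ((Set.finite_Iic (r • Multiset.range (w.toNat + 1))).prod
    (Set.finite_Iic (s • Multiset.range (w.toNat + 1)))).subset ?_
  rintro ⟨l, m⟩ ⟨rfl, rfl, hsum⟩
  have hle : l.sum + m.sum ≤ w.toNat := by
    rw [← hsum]
    norm_cast
    exact Nat.le_mul_of_pos_left _ hR
  exact ⟨le_card_nsmul_range l (by omega), le_card_nsmul_range m (by omega)⟩

theorem pairCount_nonneg (R r s : ℕ) (w : ℤ) : 0 ≤ pairCount R r s w :=
  Nat.cast_nonneg _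

theorem pairCount_comm (R r s : ℕ) (w : ℤ) : pairCount R r s w = pairCount R s r w := by
  have hswap : partitionPairs R s r w = Prod.swap '' partitionPairs R r s w := by
    rw [Set.image_swap_eq_preimage_swap]
    ext p
    simp only [partitionPairs, Set.mem_ofPred_eq, Set.mem_preimage, Prod.fst_swap, Prod.snd_swap,
      add_comm (p.2.sum : ℤ)]
    tauto
  rw [pairCount, pairCount, hswap, Set.ncard_image_of_injective _ Prod.swap_injective]

theorem pairCount_of_neg (hw : w < 0) : pairCount R r s w = 0 := by
  have hempty : partitionPairs R r s w = ∅ := by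
    refine Set.eq_empty_of_forall_notMem fun p ⟨_, _, hsum⟩ => ?_
    have : (0 : ℤ) ≤ R * (p.1.sum + p.2.sum) := by positivity
    omega
  simp [pairCount, hempty]

theorem pairCount_zero_zero (R : ℕ) (w : ℤ) : pairCount R 0 0 w = if w = 0 then 1 else 0 := by
  have hset : partitionPairs R 0 0 w = if w = 0 then {(0, 0)} else ∅ := by
    ext ⟨l, m⟩
    simp only [partitionPairs, Set.mem_ofPred_eq, Multiset.card_eq_zero]
    split_ifs with hw
    · simp only [Set.mem_singleton_iff, Prod.mk.injEq]
      grind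
    · grind
  rw [pairCount, hset]
  split_ifs <;> simp

theorem sep_zero_mem_eq_image (R r s : ℕ) (w : ℤ) :
    {p ∈ partitionPairs R (r + 1) s w | 0 ∈ p.1} =
      Prod.map (0 ::ₘ ·) id '' partitionPairs R r s w := by
  ext ⟨l, m⟩
  constructor
  · rintro ⟨⟨hl, hm, hsum⟩, hmem⟩
    obtain ⟨u, rfl⟩ := Multiset.exists_cons_of_mem hmem
    exact ⟨(u, m), ⟨by simpa using hl, hm, by simpa using hsum⟩, rfl⟩
  · rintro ⟨⟨u, v⟩, ⟨hu, hv, hsum⟩, h⟩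
    obtain ⟨rfl, rfl⟩ := Prod.mk.inj h
    exact ⟨⟨by simpa using hu, hv, by simpa using hsum⟩, Multiset.mem_cons_self 0 u⟩

theorem sep_zero_notMem_eq_image (R r s : ℕ) (w : ℤ) :
    {p ∈ partitionPairs R r s w | 0 ∉ p.1} =
      Prod.map (Multiset.map (· + 1)) id '' partitionPairs R r s (w - r * R) := by
  have hsum_map (l : Multiset ℕ) : (l.map (· + 1)).sum = l.sum + l.card := by
    simp [Multiset.sum_map_add]
  ext ⟨l, m⟩
  constructor
  · rintro ⟨⟨hl, hm, hsum⟩, hmem⟩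
    obtain ⟨u, rfl⟩ : ∃ u : Multiset ℕ, u.map (· + 1) = l := by
      refine ⟨l.map Nat.pred, ?_⟩
      rw [Multiset.map_map]
      exact (Multiset.map_congr rfl fun a ha =>
        Nat.succ_pred (ne_of_mem_of_not_mem ha hmem)).trans (Multiset.map_id l)
    rw [Multiset.card_map] at hl
    subst hl
    simp only [hsum_map, Nat.cast_add] at hsum
    exact ⟨(u, m), ⟨rfl, hm, by linarith⟩, rfl⟩
  · rintro ⟨⟨u, v⟩, ⟨rfl, hv, hsum⟩, h⟩
    obtain ⟨rfl, rfl⟩ := Prod.mk.inj h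
    refine ⟨⟨by simp, hv, ?_⟩, by simp⟩
    simp only [hsum_map, id, Nat.cast_add] at hsum ⊢
    linarith

theorem pairCount_succ_left (hR : 0 < R) (r s : ℕ) (w : ℤ) :
    pairCount R (r + 1) s w =
      pairCount R r s w + pairCount R (r + 1) s (w - (r + 1) * R) := by
  have hsplit := Set.ncard_inter_add_ncard_sdiff_eq_ncard (partitionPairs R (r + 1) s w)
    {p | 0 ∈ p.1} (finite_partitionPairs hR (r + 1) s w)
  have hmem : partitionPairs R (r + 1) s w ∩ {p | 0 ∈ p.1} = _ :=
    sep_zero_mem_eq_image R r s w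
  have hnotMem : partitionPairs R (r + 1) s w \ {p | 0 ∈ p.1} = _ :=
    sep_zero_notMem_eq_image R (r + 1) s w
  have hcons : Function.Injective fun l : Multiset ℕ => 0 ::ₘ l :=
    fun _ _ => (Multiset.cons_inj_right 0).1
  rw [hmem, hnotMem,
    Set.ncard_image_of_injective _ (hcons.prodMap Function.injective_id),
    Set.ncard_image_of_injective _
      ((Multiset.map_injective (add_left_injective 1)).prodMap Function.injective_id)] at hsplit
  push_cast at hsplit
  simp only [pairCount]
  exact_mod_cast hsplit.symm

theorem pairCount_one_left (hR : 0 < R) (s : ℕ) (w : ℤ) :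
    pairCount R 1 s w = pairCount R 0 s w + pairCount R 1 s (w - R) := by
  simpa using pairCount_succ_left hR 0 s w

theorem pairCount_zero_zero_le (hR : 0 < R) (s : ℕ) (w : ℤ) :
    pairCount R 0 0 w ≤ pairCount R 0 s w := by
  rw [pairCount_comm R 0 s]
  refine monotone_nat_of_le_succ (f := fun r => pairCount R r 0 w) (fun r => ?_) (Nat.zero_le s)
  have := pairCount_succ_left hR r 0 w
  have := pairCount_nonneg R (r + 1) 0 (w - (r + 1) * R)
  linarith

-- In generating functions: for `r ≥ 1` the factor `1 - Q` of `(Q; Q)_r` cancels in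
-- `(1 - Q) / ((Q; Q)_r (Q; Q)_s)`, which leaves non-negative coefficients and constant term `1`.
theorem pairCount_sub_add_le_of_pos_left (hR : 0 < R) (hr : 0 < r) (s : ℕ) (w : ℤ) :
    pairCount R r s (w - R) + pairCount R 0 0 w ≤ pairCount R r s w := by
  induction r, hr using Nat.le_induction generalizing w with
  | base =>
    have := pairCount_one_left hR s w
    have := pairCount_zero_zero_le hR s w
    linarith
  | succ r _ ihr =>
    obtain ⟨k, hk⟩ : ∃ k : ℕ, w < k := ⟨w.toNat + 1, by omega⟩
    induction k generalizing w with
    | zero =>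
      simp only [Nat.cast_zero] at hk
      rw [pairCount_of_neg hk, pairCount_of_neg hk, pairCount_of_neg (by omega), add_zero]
    | succ k ihk =>
      have hlt : w - (r + 1) * R < k := by
        push_cast at hk
        nlinarith
      have hw := pairCount_succ_left hR r s w
      have hwR := pairCount_succ_left hR r s (w - R)
      rw [sub_right_comm] at hwR
      linarith [ihr w, ihk (w - (r + 1) * R) hlt, pairCount_nonneg R 0 0 (w - (r + 1) * R)]

theorem pairCount_sub_add_le (hR : 0 < R) (hrs : 0 < r + s) (w : ℤ) :
    pairCount R r s (w - R) + pairCount R 0 0 w ≤ pairCount R r s w := by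
  obtain rfl | hr := Nat.eq_zero_or_pos r
  · rw [pairCount_comm R 0 s, pairCount_comm R 0 s]
    exact pairCount_sub_add_le_of_pos_left hR (by omega) 0 w
  · exact pairCount_sub_add_le_of_pos_left hR hr s w

theorem pairCount_sub_mul_le (hR : 0 < R) (hrs : 0 < r + s) (w : ℤ) (k : ℕ) :
    pairCount R r s (w - k * R) ≤ pairCount R r s w := by
  have hanti : Antitone fun k : ℕ => pairCount R r s (w - k * R) := by
    refine antitone_nat_of_succ_le fun k => ?_
    have hstep := pairCount_sub_add_le hR hrs (w - k * R)
    have hnonneg := pairCount_nonneg R 0 0 (w - k * R)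
    rw [show w - ((k + 1 : ℕ) : ℤ) * R = w - k * R - R by push_cast; ring]
    linarith
  simpa using hanti (Nat.zero_le k)

theorem one_le_pairCount_zero_one (hR : 0 < R) (k : ℕ) : 1 ≤ pairCount R 0 1 (R * k) := by
  have hzero : 1 ≤ pairCount R 0 1 0 := by
    simpa [pairCount_zero_zero] using pairCount_zero_zero_le hR 1 0
  have hmono := pairCount_sub_mul_le hR (r := 0) (s := 1) one_pos (R * k) k
  rw [mul_comm (R : ℤ), sub_self, mul_comm] at hmono
  linarith

end PairCount

section Expansion

theorem map_add_map_injective {α β γ : Type*} {f : α → γ} {g : β → γ}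
    (hf : Function.Injective f) (hg : Function.Injective g) (hfg : ∀ i j, f i ≠ g j) :
    Function.Injective fun p : Multiset α × Multiset β => p.1.map f + p.2.map g := by
  classical
  have hfilter (p : Multiset α × Multiset β) :
      (p.1.map f + p.2.map g).filter (· ∈ Set.range f) = p.1.map f := by
    rw [Multiset.filter_add, Multiset.filter_eq_self.2 (by simp),
      Multiset.filter_eq_nil.2 (by simpa using fun j _ i => hfg i j), add_zero]
  intro p q hpq
  dsimp only at hpq
  have hfst : p.1.map f = q.1.map f := by rw [← hfilter p, hpq, hfilter q]
  have hsnd : p.2.map g = q.2.map g := by rwa [hfst, add_right_inj] at hpq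
  exact Prod.ext (Multiset.map_injective hf hfst) (Multiset.map_injective hg hsnd)

theorem exists_map_add_map_eq {α β γ : Type*} {f : α → γ} {g : β → γ} (l : Multiset γ)
    (hl : ∀ c ∈ l, c ∈ Set.range f ∪ Set.range g) :
    ∃ p : Multiset α × Multiset β, p.1.map f + p.2.map g = l := by
  induction l using Multiset.induction with
  | empty => exact ⟨(0, 0), rfl⟩
  | cons c l ih =>
    obtain ⟨p, rfl⟩ := ih fun d hd => hl d (Multiset.mem_cons_of_mem hd)
    rcases hl c (Multiset.mem_cons_self c _) with ⟨i, rfl⟩ | ⟨j, rfl⟩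
    · exact ⟨(i ::ₘ p.1, p.2), by simp⟩
    · exact ⟨(p.1, j ::ₘ p.2), by simp⟩

/-- The partition with parts `a + j * R` for `j ∈ p.1` and `b + j * R` for `j ∈ p.2`. -/
def assemble (R a b : ℕ) (p : Multiset ℕ × Multiset ℕ) : Multiset ℕ :=
  p.1.map (fun j => a + j * R) + p.2.map (fun j => b + j * R)

variable {R a b : ℕ}

theorem assemble_injective (hR : 0 < R) (hab : ¬ a ≡ b [MOD R]) :
    Function.Injective (assemble R a b) := by
  have hinj (c : ℕ) : Function.Injective fun j => c + j * R :=
    (add_right_injective c).comp fun _ _ => Nat.eq_of_mul_eq_mul_right hR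
  exact map_add_map_injective (hinj a) (hinj b) (add_mul_ne_add_mul hab)

theorem sum_assemble (p : Multiset ℕ × Multiset ℕ) :
    (assemble R a b p).sum = p.1.card * a + p.2.card * b + R * (p.1.sum + p.2.sum) := by
  simp only [assemble, Multiset.sum_add, Multiset.sum_map_add, Multiset.map_const',
    Multiset.sum_replicate, smul_eq_mul, Multiset.sum_map_mul_right, Multiset.map_id']
  ring

theorem pos_and_mem_progressions_of_mem_assemble (ha : 0 < a) (hb : 0 < b)
    {p : Multiset ℕ × Multiset ℕ} {x : ℕ} (hx : x ∈ assemble R a b p) :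
    0 < x ∧ x ∈ progressions R a b := by
  rcases Multiset.mem_add.1 hx with hx | hx <;> obtain ⟨j, _, rfl⟩ := Multiset.mem_map.1 hx
  · exact ⟨by omega, .inl ⟨j, rfl⟩⟩
  · exact ⟨by omega, .inr ⟨j, rfl⟩⟩

theorem partitionsIn_progressions_eq_image (ha : 0 < a) (hb : 0 < b) (w : ℤ) :
    partitionsIn (progressions R a b) w =
      assemble R a b '' {p | ((assemble R a b p).sum : ℤ) = w} := by
  ext l
  constructor
  · rintro ⟨hsum, hparts⟩
    obtain ⟨p, rfl⟩ := exists_map_add_map_eq l fun c hc => (hparts c hc).2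
    exact ⟨p, hsum, rfl⟩
  · rintro ⟨p, hsum, rfl⟩
    exact ⟨hsum, fun x => pos_and_mem_progressions_of_mem_assemble ha hb⟩

theorem card_fst_add_card_snd_le_sum_assemble (ha : 0 < a) (hb : 0 < b)
    (p : Multiset ℕ × Multiset ℕ) : p.1.card + p.2.card ≤ (assemble R a b p).sum := by
  rw [sum_assemble]
  nlinarith [Nat.zero_le (R * (p.1.sum + p.2.sum))]

-- Euler's expansion `1 / (z; Q)_∞ = ∑ z ^ r / (Q; Q)_r` at `z = q ^ a` and at `z = q ^ b`.
theorem partitionCount_progressions_eq_sum (hR : 0 < R) (ha : 0 < a) (hb : 0 < b)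
    (hab : ¬ a ≡ b [MOD R]) {N : ℕ} {w : ℤ} (hw : w < N) :
    partitionCount (progressions R a b) w =
      ∑ p ∈ range N ×ˢ range N, pairCount R p.1 p.2 (w - p.1 * a - p.2 * b) := by
  classical
  set P : Set (Multiset ℕ × Multiset ℕ) := {p | ((assemble R a b p).sum : ℤ) = w} with hP
  have himage : partitionsIn (progressions R a b) w = assemble R a b '' P :=
    partitionsIn_progressions_eq_image ha hb w
  have hinj := assemble_injective hR hab
  have hfin : P.Finite :=
    .of_finite_image (himage ▸ finite_partitionsIn _ w) hinj.injOn
  have hmaps : Set.MapsTo (fun p : Multiset ℕ × Multiset ℕ => (p.1.card, p.2.card))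
      hfin.toFinset (range N ×ˢ range N : Finset (ℕ × ℕ)) := by
    intro p hp
    have hsum : ((assemble R a b p).sum : ℤ) = w := hfin.mem_toFinset.1 hp
    have hcard := card_fst_add_card_snd_le_sum_assemble (R := R) ha hb p
    exact mem_product.2 ⟨mem_range.2 (by dsimp only; omega), mem_range.2 (by dsimp only; omega)⟩
  rw [partitionCount, himage, Set.ncard_image_of_injective _ hinj,
    Set.ncard_eq_toFinset_card P hfin, card_eq_sum_card_fiberwise hmaps, Nat.cast_sum]
  refine sum_congr rfl fun ⟨r, s⟩ _ => ?_
  rw [pairCount, ← Set.ncard_coe_finset]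
  congr 2
  ext p
  simp only [coe_filter, Set.Finite.mem_toFinset, hP, partitionPairs, Set.mem_ofPred_eq,
    Prod.mk.injEq, sum_assemble, Nat.cast_add, Nat.cast_mul]
  grind

end Expansion

section TruncatedSum

/-- The number of partitions of `w` into parts of the form `j * R + S` and `j * R - S` with
`j ≥ k`. It is meant for `S < R` and `1 ≤ k`, so that the subtraction is not truncated. -/
noncomputable def tailCount (R S k : ℕ) (w : ℤ) : ℤ :=
  partitionCount (progressions R (k * R + S) (k * R - S)) w

variable {R S k : ℕ}

theorem not_modEq_sub (hS : 0 < S) (hSR : S < R) (h2S : 2 * S ≠ R) (hk : 1 ≤ k) :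
    ¬ k * R + S ≡ k * R - S [MOD R] := by
  obtain ⟨k, rfl⟩ := Nat.exists_eq_add_of_le' hk
  have hsub : (k + 1) * R - S = R - S + k * R := by
    rw [add_one_mul]
    omega
  rw [hsub, Nat.ModEq, Nat.mul_add_mod', Nat.add_mul_mod_self_right, Nat.mod_eq_of_lt hSR,
    Nat.mod_eq_of_lt (by omega)]
  omega

theorem cast_mul_sub (hSR : S < R) (hk : 1 ≤ k) : ((k * R - S : ℕ) : ℤ) = k * R - S := by
  rw [Nat.cast_sub (hSR.le.trans (Nat.le_mul_of_pos_left R hk)), Nat.cast_mul]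

theorem tailCount_succ (hS : 0 < S) (hSR : S < R) (h2S : 2 * S ≠ R) (hk : 1 ≤ k) (w : ℤ) :
    tailCount R S (k + 1) w =
      tailCount R S k w - tailCount R S k (w - k * R - S) - tailCount R S k (w - k * R + S)
        + tailCount R S k (w - 2 * k * R) := by
  have hle : R ≤ k * R := Nat.le_mul_of_pos_left R hk
  unfold tailCount
  rw [show (k + 1) * R + S = k * R + S + R by ring,
    show (k + 1) * R - S = k * R - S + R by rw [add_one_mul]; omega,
    partitionCount_progressions_add_add (by omega) (by omega) (by omega)
      (not_modEq_sub hS hSR h2S hk), cast_mul_sub hSR hk]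
  push_cast
  ring_nf

theorem tailCount_eq_sum (hS : 0 < S) (hSR : S < R) (h2S : 2 * S ≠ R) (hk : 1 ≤ k) {N : ℕ}
    {w : ℤ} (hw : w < N) :
    tailCount R S k w = ∑ p ∈ range N ×ˢ range N,
      pairCount R p.1 p.2 (w - p.1 * (k * R + S) - p.2 * (k * R - S)) := by
  have hle : R ≤ k * R := Nat.le_mul_of_pos_left R hk
  rw [tailCount, partitionCount_progressions_eq_sum (by omega) (by omega) (by omega)
    (not_modEq_sub hS hSR h2S hk) hw, cast_mul_sub hSR hk]
  push_cast
  rfl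

theorem y_eq_sum_tailCount (hS : 0 < S) (hSR : S < R) (h2S : 2 * S ≠ R) (k : ℕ) (n : ℤ) :
    (y R S k n : ℤ) =
      ∑ i ∈ range (2 * k + 1), tailCount R S 1 (n - (k * (k + 1) * R / 2 - k * S) - i * S) := by
  have hmod : ¬ S ≡ R - S [MOD R] := by
    simpa [Nat.ModEq] using not_modEq_sub hS hSR h2S le_rfl
  have hy : y R S k n = {l ∈ partitionsIn (progressions R S (R - S))
      (n - (k * (k + 1) * R / 2 - k * S)) | l.count S < 2 * k + 1}.ncard := by
    rw [y, ← Nat.card_coe_set_eq, progressions_eq_setOf_mod hSR (by omega)]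
    simp only [partitionsIn, Set.mem_ofPred_eq, and_assoc, Nat.lt_succ_iff]
    rfl
  rw [hy, ncard_sep_count_lt_eq_sum hS (left_mem_progressions _ _ _),
    progressions_sdiff_left (by omega) hmod]
  simp only [tailCount, one_mul, add_comm S R]

theorem y_two_sub_y_one_add_y_zero_eq (hS : 0 < S) (hSR : S < R) (h2S : 2 * S ≠ R) (n : ℤ) :
    (y R S 2 n : ℤ) - y R S 1 n + y R S 0 n =
      tailCount R S 2 n - tailCount R S 2 (n - R)
        + (tailCount R S 1 (n - 4 * R + S) - tailCount R S 2 (n - 2 * R + S))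
        + (tailCount R S 1 (n - 4 * R) - tailCount R S 2 (n - 2 * R))
        + (tailCount R S 1 (n - 4 * R - S) - tailCount R S 2 (n - 2 * R - S)) := by
  have htri_one : ((1 : ℕ) : ℤ) * ((1 : ℕ) + 1) * R / 2 = R := by omega
  have htri_two : ((2 : ℕ) : ℤ) * ((2 : ℕ) + 1) * R / 2 = 3 * R := by omega
  have htail := tailCount_succ hS hSR h2S le_rfl
  simp only [Nat.reduceAdd, Nat.cast_one, one_mul, mul_one] at htail
  simp only [y_eq_sum_tailCount hS hSR h2S, htri_one, htri_two, htail, sum_range_succ]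
  push_cast
  simp only [range_zero, sum_empty, zero_mul, sub_zero, zero_add, one_mul, Int.zero_ediv,
    sub_self]
  ring_nf

/-- The contribution of the partitions with `r` parts congruent to `S` and `s` parts congruent to
`-S` to `y R S 2 n - y R S 1 n + y R S 0 n`, where `v = n - r * (2 * R + S) - s * (2 * R - S)`. -/
noncomputable def contribution (R S r s : ℕ) (v : ℤ) : ℤ :=
  pairCount R r s v - pairCount R r s (v - R)
    + (pairCount R r s (v + (r + s - 4) * R + S) - pairCount R r s (v - 2 * R + S))
    + (pairCount R r s (v + (r + s - 4) * R) - pairCount R r s (v - 2 * R))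
    + (pairCount R r s (v + (r + s - 4) * R - S) - pairCount R r s (v - 2 * R - S))

theorem y_two_sub_y_one_add_y_zero_eq_sum_contribution (hS : 0 < S) (hSR : S < R)
    (h2S : 2 * S ≠ R) {N : ℕ} {n : ℤ} (hn : n < N) :
    (y R S 2 n : ℤ) - y R S 1 n + y R S 0 n = ∑ p ∈ range N ×ˢ range N,
      contribution R S p.1 p.2 (n - p.1 * (2 * R + S) - p.2 * (2 * R - S)) := by
  rw [y_two_sub_y_one_add_y_zero_eq hS hSR h2S]
  have hone {w : ℤ} (hw : w < N) := tailCount_eq_sum hS hSR h2S le_rfl hw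
  have htwo {w : ℤ} (hw : w < N) := tailCount_eq_sum hS hSR h2S one_le_two hw
  rw [htwo hn, htwo (w := n - R) (by omega), hone (w := n - 4 * R + S) (by omega),
    htwo (w := n - 2 * R + S) (by omega), hone (w := n - 4 * R) (by omega),
    htwo (w := n - 2 * R) (by omega), hone (w := n - 4 * R - S) (by omega),
    htwo (w := n - 2 * R - S) (by omega)]
  simp only [← sum_sub_distrib, ← sum_add_distrib]
  refine sum_congr rfl fun p _ => ?_
  unfold contribution
  push_cast
  ring_nf

variable {r s : ℕ}

theorem pairCount_sub_le_contribution (hR : 0 < R) (hrs : 2 ≤ r + s) (S : ℕ) (v : ℤ) :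
    pairCount R r s v - pairCount R r s (v - R) ≤ contribution R S r s v := by
  have hmono (u : ℤ) :
      pairCount R r s (v - 2 * R + u) ≤ pairCount R r s (v + (r + s - 4) * R + u) := by
    have hstep := pairCount_sub_mul_le hR (r := r) (s := s) (by omega)
      (v + (r + s - 4) * R + u) (r + s - 2)
    rw [Nat.cast_sub hrs] at hstep
    push_cast at hstep
    ring_nf at hstep ⊢
    exact hstep
  have hzero := hmono 0
  have hneg := hmono (-S)
  simp only [add_zero, ← sub_eq_add_neg] at hzero hneg
  unfold contribution
  linarith [hmono S]

theorem pairCount_zero_zero_le_contribution (hR : 0 < R) (hrs : 2 ≤ r + s) (S : ℕ) (v : ℤ) :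
    pairCount R 0 0 v ≤ contribution R S r s v := by
  have hdiff := pairCount_sub_le_contribution hR hrs S v
  have hstep := pairCount_sub_add_le hR (two_pos.trans_le hrs) v
  linarith

theorem pairCount_zero_one_le_contribution (hR : 0 < R) (S : ℕ) (v : ℤ) :
    pairCount R 0 1 v ≤ contribution R S 1 1 v := by
  have hdiff := pairCount_sub_le_contribution hR (r := 1) (s := 1) le_rfl S v
  have hstep := pairCount_one_left hR 1 v
  linarith

theorem contribution_zero_zero (R S : ℕ) (v : ℤ) :
    contribution R S 0 0 v =
      pairCount R 0 0 v - pairCount R 0 0 (v - R)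
        + (pairCount R 0 0 (v - 4 * R + S) - pairCount R 0 0 (v - 2 * R + S))
        + (pairCount R 0 0 (v - 4 * R) - pairCount R 0 0 (v - 2 * R))
        + (pairCount R 0 0 (v - 4 * R - S) - pairCount R 0 0 (v - 2 * R - S)) := by
  simp [contribution, ← sub_eq_add_neg]

theorem contribution_of_add_eq_one (hR : 0 < R) (hrs : r + s = 1) (S : ℕ) (v : ℤ) :
    contribution R S r s v =
      pairCount R 0 0 v - pairCount R 0 0 (v - 2 * R + S) - pairCount R 0 0 (v - 2 * R)
        - pairCount R 0 0 (v - 2 * R - S) := by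
  have hstep (u : ℤ) : pairCount R r s u = pairCount R 0 0 u + pairCount R r s (u - R) := by
    obtain ⟨rfl, rfl⟩ | ⟨rfl, rfl⟩ := Nat.add_eq_one_iff.1 hrs
    · simpa only [pairCount_comm R 0 1] using pairCount_one_left hR 0 u
    · exact pairCount_one_left hR 0 u
  have hcast : (r + s - 4 : ℤ) = -3 := by omega
  have hv := hstep v
  have hpos := hstep (v - 2 * R + S)
  have hzero := hstep (v - 2 * R)
  have hneg := hstep (v - 2 * R - S)
  rw [contribution, hcast]
  ring_nf at hv hpos hzero hneg ⊢
  linarith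

theorem low_contributions_le_sum_contribution (hR : 0 < R) (S : ℕ) (n : ℤ) {N : ℕ} (hN : 3 ≤ N) :
    contribution R S 0 0 n + contribution R S 1 0 (n - 2 * R - S)
        + contribution R S 0 1 (n - 2 * R + S) + contribution R S 2 0 (n - 4 * R - 2 * S)
        + contribution R S 0 2 (n - 4 * R + 2 * S) + contribution R S 1 1 (n - 4 * R) ≤
      ∑ p ∈ range N ×ˢ range N,
        contribution R S p.1 p.2 (n - p.1 * (2 * R + S) - p.2 * (2 * R - S)) := by
  let low : Finset (ℕ × ℕ) := {(0, 0), (1, 0), (0, 1), (2, 0), (0, 2), (1, 1)}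
  have hlow : low ⊆ range N ×ˢ range N := by
    intro p hp
    simp only [low, mem_insert, mem_singleton] at hp
    rw [mem_product, mem_range, mem_range]
    grind
  have hhigh (p : ℕ × ℕ) (hp : p ∉ low) : 2 ≤ p.1 + p.2 := by
    simp only [low, mem_insert, mem_singleton, not_or] at hp
    grind
  refine le_trans (le_of_eq ?_) (sum_le_sum_of_subset_of_nonneg hlow fun p _ hp =>
    (pairCount_nonneg R 0 0 _).trans
      (pairCount_zero_zero_le_contribution hR (hhigh p hp) S _))
  rw [sum_insert (by decide), sum_insert (by decide), sum_insert (by decide),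
    sum_insert (by decide), sum_insert (by decide), sum_singleton]
  push_cast
  ring_nf

theorem le_sum_contribution (hR : 0 < R) (S : ℕ) (n : ℤ) {N : ℕ} (hN : 3 ≤ N) :
    pairCount R 0 0 n - pairCount R 0 0 (n - R) - pairCount R 0 0 (n - 2 * R)
        - pairCount R 0 0 (n - 4 * R) + pairCount R 0 1 (n - 4 * R) ≤
      ∑ p ∈ range N ×ˢ range N,
        contribution R S p.1 p.2 (n - p.1 * (2 * R + S) - p.2 * (2 * R - S)) := by
  refine le_trans ?_ (low_contributions_le_sum_contribution hR S n hN)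
  have h20 := pairCount_zero_zero_le_contribution hR (r := 2) (s := 0) le_rfl S
    (n - 4 * R - 2 * S)
  have h02 := pairCount_zero_zero_le_contribution hR (r := 0) (s := 2) le_rfl S
    (n - 4 * R + 2 * S)
  have h11 := pairCount_zero_one_le_contribution hR S (n - 4 * R)
  rw [contribution_zero_zero, contribution_of_add_eq_one hR (add_zero 1),
    contribution_of_add_eq_one hR (zero_add 1)]
  ring_nf at h20 h02 h11 ⊢
  linarith

theorem five_le_pentagonal {i : ℤ} (hzero : i ≠ 0) (hone : i ≠ 1) (hneg : i ≠ -1) :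
    5 ≤ i * (3 * i - 1) / 2 := by
  have hmul : 10 ≤ i * (3 * i - 1) := by
    obtain h | h : 2 ≤ i ∨ i ≤ -2 := by omega
    all_goals nlinarith
  omega

theorem rho_le_pairCount (hR : 0 < R) {ρ : ℤ → ℤ}
    (hpentagonal : ∀ i : ℤ, ρ (R * (i * (3 * i - 1) / 2)) = (-1) ^ i.natAbs)
    (hother : ∀ m : ℤ, (∀ i : ℤ, m ≠ R * (i * (3 * i - 1) / 2)) → ρ m = 0) (n : ℤ) :
    ρ n ≤ pairCount R 0 0 n - pairCount R 0 0 (n - R) - pairCount R 0 0 (n - 2 * R)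
        - pairCount R 0 0 (n - 4 * R) + pairCount R 0 1 (n - 4 * R) := by
  have hnonneg := pairCount_nonneg R 0 1 (n - 4 * R)
  by_cases hpent : ∃ i : ℤ, n = R * (i * (3 * i - 1) / 2)
  · obtain ⟨i, rfl⟩ := hpent
    rw [hpentagonal i]
    by_cases hi : i = 0 ∨ i = 1 ∨ i = -1
    · simp only [pairCount_zero_zero]
      obtain rfl | rfl | rfl := hi <;> norm_num at hnonneg ⊢ <;> grind
    · push Not at hi
      have hfive := five_le_pentagonal hi.1 hi.2.1 hi.2.2
      obtain ⟨m, hm⟩ := Int.eq_ofNat_of_zero_le (show 0 ≤ i * (3 * i - 1) / 2 - 4 by omega)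
      have hlarge : 5 * (R : ℤ) ≤ R * (i * (3 * i - 1) / 2) := by nlinarith
      have hone := one_le_pairCount_zero_one hR m
      rw [← hm, mul_sub, mul_comm (R : ℤ) 4] at hone
      have hsign : (-1 : ℤ) ^ i.natAbs ≤ 1 := by
        obtain h | h := neg_one_pow_eq_or ℤ i.natAbs <;> simp [h]
      simp only [pairCount_zero_zero]
      rw [if_neg (by omega), if_neg (by omega), if_neg (by omega), if_neg (by omega)]
      linarith
  · push Not at hpent
    have hR_ne : n ≠ R := by simpa using hpent 1
    have h2R_ne : n ≠ R * 2 := by simpa using hpent (-1)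
    have hle := pairCount_zero_zero_le hR 1 (n - 4 * R)
    have hzero := pairCount_nonneg R 0 0 n
    rw [hother n hpent, pairCount_zero_zero R (n - R), pairCount_zero_zero R (n - 2 * R),
      if_neg (by omega), if_neg (by omega)]
    linarith

end TruncatedSum

end TruncatedJTP

/-- Case k = 3 of the truncated JTP conjecture:
`y_{S,R,2}(n) − y_{S,R,1}(n) + y_{S,R,0}(n) − ρ_R(n) ≥ 0`. -/
theorem stmt2 (R S : ℕ) (hR : 2 ≤ R) (hS : 1 ≤ S) (hSR : S < R) (h2S : 2 * S ≠ R)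
    (ρ : ℤ → ℤ)
    (hρ1 : ∀ i : ℤ, ρ ((R : ℤ) * (i * (3 * i - 1) / 2)) = (-1) ^ i.natAbs)
    (hρ2 : ∀ m : ℤ, (∀ i : ℤ, m ≠ (R : ℤ) * (i * (3 * i - 1) / 2)) → ρ m = 0)
    (n : ℤ) (hn : 0 ≤ n) :
    0 ≤ (y R S 2 n : ℤ) - (y R S 1 n : ℤ) + (y R S 0 n : ℤ) - ρ n := by
  have hRpos : 0 < R := by omega
  rw [TruncatedJTP.y_two_sub_y_one_add_y_zero_eq_sum_contribution hS hSR h2S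
    (show n < (n.toNat + 3 : ℕ) by omega), sub_nonneg]
  exact (TruncatedJTP.rho_le_pairCount hRpos hρ1 hρ2 n).trans
    (TruncatedJTP.le_sum_contribution hRpos S n (Nat.le_add_left 3 _))
end

section
/- Let k ≥ 1 be an integer. Then for all integers n ≥ 0, (−1)^k · Σ_{j=−k}^{k} (−1)^j b_3(n − j(3j−1)/2) + (−1)^{k−1} ρ_3(n) ≥ 0. -/
/-- `b3 m` is the number of 3-regular partitions of `m` (partitions with no part
divisible by 3), with `b3 m = 0` for `m < 0`. A partition is a multiset of positive parts. -/
noncomputable def b3 (m : ℤ) : ℕ :=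
  Nat.card {s : Multiset ℕ // (s.sum : ℤ) = m ∧ ∀ a ∈ s, 0 < a ∧ ¬ 3 ∣ a}

/-!
Write `ω(j) = j(3j - 1)/2` and let `F = ∑ b(m) X^m` be the generating function of the partitions
whose parts satisfy a predicate `p`. By the pentagonal number theorem, `∑_j (-1)^j b(n - ω(j))` is
the `n`-th coefficient of `F · ∏ (1 - X^i)`. Grouping `j` with `-j`, the symmetric partial sums of
this series are those of an alternating series, so the sign of the truncation error is known as
soon as the terms `b(n - ω(i)) + b(n - ω(-i))`, `i ≥ 1`, decrease in `i`. The gaps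
`ω(i + 1) - ω(i) = 3i + 1` and `ω(-(i + 1)) - ω(-i) = 3i + 2` are prime to 3: if `p` admits all
such parts, adjoining a part equal to the gap is an injection that gives the monotonicity. For
`ℓ`-regular partitions, `F · ∏ (1 - X^i) = ∏ (1 - X^(ℓi))`, whose `n`-th coefficient is `ρ_ℓ(n)`.
-/

open Filter Finset PowerSeries PowerSeries.WithPiTopology

section AlternatingSeries

variable {E : Type*} [Ring E]

theorem sum_Icc_neg_one_pow_natAbs_mul (g : ℤ → E) (k : ℕ) :
    ∑ j ∈ Icc (-k : ℤ) k, (-1) ^ j.natAbs * g j =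
      g 0 - ∑ i ∈ range k, (-1) ^ i * (g (i + 1) + g (-(i + 1))) := by
  induction k with
  | zero => simp
  | succ k ih =>
    have hk : ((k : ℤ) + 1).natAbs = k + 1 := by omega
    push_cast
    rw [sum_Icc_succ_eq_add_endpoints, ih, sum_range_succ, Int.natAbs_neg, hk, pow_succ]
    noncomm_ring

variable [PartialOrder E] [IsOrderedRing E] [TopologicalSpace E] [OrderClosedTopology E]

theorem neg_one_pow_mul_tendsto_sub_alternating_series_nonneg {f : ℕ → E} {l : E}
    (hf : Antitone f) (hl : Tendsto (fun k ↦ ∑ i ∈ range k, (-1) ^ i * f i) atTop (nhds l))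
    (k : ℕ) :
    0 ≤ (-1) ^ k * (l - ∑ i ∈ range k, (-1) ^ i * f i) := by
  obtain ⟨m, rfl | rfl⟩ := k.even_or_odd'
  · simpa using hf.alternating_series_le_tendsto hl m
  · simpa [pow_succ] using hf.tendsto_le_alternating_series hl m

theorem neg_one_pow_mul_sum_Icc_sub_hasSum_nonneg [ContinuousSub E] {g : ℤ → E} {l : E}
    (hg : Antitone fun i : ℕ ↦ g (i + 1) + g (-(i + 1)))
    (hl : HasSum (fun j ↦ (-1) ^ j.natAbs * g j) l) (k : ℕ) :
    0 ≤ (-1) ^ k * (∑ j ∈ Icc (-k : ℤ) k, (-1) ^ j.natAbs * g j - l) := by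
  have h : Tendsto (fun k ↦ ∑ i ∈ range k, (-1) ^ i * (g (i + 1) + g (-(i + 1)))) atTop
      (nhds (g 0 - l)) := by
    simpa [Function.comp_def, sum_Icc_neg_one_pow_natAbs_mul] using
      (hl.comp tendsto_Icc_neg).const_sub (g 0)
  rw [sum_Icc_neg_one_pow_natAbs_mul, sub_right_comm]
  exact neg_one_pow_mul_tendsto_sub_alternating_series_nonneg hg h k

end AlternatingSeries

section PentagonalSeries

variable {R : Type*} [CommRing R]

theorem hasSum_coeff_mul_pentagonalSeries [TopologicalSpace R] [IsTopologicalSemiring R]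
    (F : R⟦X⟧) (n : ℕ) :
    HasSum (fun j : ℤ ↦ (-1) ^ j.natAbs * coeff n (F * X ^ pentagonal j))
      (coeff n (F * pentagonalSeries R)) := by
  convert (hasSum_iff_hasSum_coeff R).1 ((hasSum_pentagonalSeries R).mul_left F) n using 2 with j
  rw [Int.coe_negOnePow, mul_left_comm, ← map_one C, ← map_neg, ← map_pow, coeff_C_mul]

theorem eq_coeff_expand_pentagonalSeries {ℓ : ℕ} (hℓ : ℓ ≠ 0) {ρ : ℤ → R}
    (hρ : ∀ i : ℤ, ρ (ℓ * (i * (3 * i - 1) / 2)) = (-1) ^ i.natAbs)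
    (hρ₀ : ∀ m : ℤ, (∀ i : ℤ, m ≠ ℓ * (i * (3 * i - 1) / 2)) → ρ m = 0) (n : ℕ) :
    ρ n = coeff n (expand ℓ hℓ (pentagonalSeries R)) := by
  simp only [← natCast_pentagonal, ← Nat.cast_mul] at hρ hρ₀
  by_cases h : ∃ i, n = ℓ * pentagonal i
  · obtain ⟨i, rfl⟩ := h
    rw [hρ, coeff_expand_mul, coeff_pentagonalSeries_pentagonal, Int.coe_negOnePow]
  · rw [hρ₀ n fun i hi ↦ h ⟨i, mod_cast hi⟩, coeff_expand]
    split_ifs with hdvd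
    · obtain ⟨m, rfl⟩ := hdvd
      rw [Nat.mul_div_cancel_left m (Nat.pos_of_ne_zero hℓ), coeff_pentagonalSeries_eq_zero]
      rintro ⟨i, rfl⟩
      exact h ⟨i, rfl⟩
    · rfl

section Topology

variable [TopologicalSpace R] {ℓ : ℕ} (hℓ : ℓ ≠ 0)

theorem continuous_expand : Continuous (expand ℓ hℓ : R⟦X⟧ → R⟦X⟧) := by
  refine continuous_iff_continuousAt.2 fun F ↦ (tendsto_iff_coeff_tendsto R _ _ _).2 fun n ↦ ?_
  simp only [coeff_expand]
  split_ifs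
  · exact (continuous_coeff R (n / ℓ)).continuousAt
  · exact tendsto_const_nhds

theorem hasProd_one_sub_X_pow_pow :
    HasProd (fun i ↦ (1 - (X ^ (i + 1)) ^ ℓ : R⟦X⟧)) (expand ℓ hℓ (pentagonalSeries R)) := by
  convert (hasProd_one_sub_X_pow R).map (expand ℓ hℓ) (continuous_expand hℓ) using 2 with i
  simp [← pow_mul, mul_comm]

end Topology

theorem mk_card_restricted_not_dvd_mul_pentagonalSeries {ℓ : ℕ} (hℓ : ℓ ≠ 0) :
    (mk fun n ↦ (#(Nat.Partition.restricted n (¬ ℓ ∣ ·)) : R)) * pentagonalSeries R =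
      expand ℓ hℓ (pentagonalSeries R) := by
  let : TopologicalSpace R := ⊥
  have : DiscreteTopology R := ⟨rfl⟩
  have hpos := Nat.pos_of_ne_zero hℓ
  have h := (Nat.Partition.hasProd_powerSeriesMk_card_countRestricted R hpos).mul
    (hasProd_one_sub_X_pow R)
  simp only [pow_mul, geom_sum_mul_neg] at h
  simp only [Nat.Partition.card_restricted_eq_card_countRestricted _ hpos]
  exact h.unique (hasProd_one_sub_X_pow_pow hℓ)

end PentagonalSeries

theorem natCast_pentagonal_add_one (j : ℤ) :
    (pentagonal (j + 1) : ℤ) = pentagonal j + (3 * j + 1) := by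
  linarith [two_mul_natCast_pentagonal j, two_mul_natCast_pentagonal (j + 1)]

theorem natCast_pentagonal_neg_add_one (j : ℤ) :
    (pentagonal (-(j + 1)) : ℤ) = pentagonal (-j) + (3 * j + 2) := by
  linarith [two_mul_natCast_pentagonal_neg j, two_mul_natCast_pentagonal_neg (j + 1)]

section RestrictedPartitionCount

/-- The number of partitions of the integer `m` all of whose parts satisfy `p`. Taking `m` in `ℤ`
makes it `0` for `m < 0`, the convention under which the sums over pentagonal numbers are finite.
The case `p = (¬ ℓ ∣ ·)` is the number `b_ℓ(m)` of `ℓ`-regular partitions. -/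
noncomputable def restrictedPartitionCount (p : ℕ → Prop) (m : ℤ) : ℕ :=
  Nat.card {s : Multiset ℕ // (s.sum : ℤ) = m ∧ ∀ a ∈ s, 0 < a ∧ p a}

variable {p : ℕ → Prop}

theorem restrictedPartitionCount_of_neg {m : ℤ} (hm : m < 0) :
    restrictedPartitionCount p m = 0 := by
  have : IsEmpty {s : Multiset ℕ // (s.sum : ℤ) = m ∧ ∀ a ∈ s, 0 < a ∧ p a} :=
    ⟨fun s ↦ by have := s.2.1; omega⟩
  exact Nat.card_of_isEmpty

/-- The multisets counted by `restrictedPartitionCount p n` are the parts of the partitions in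
`Nat.Partition.restricted n p`. -/
def equivRestrictedPartition (p : ℕ → Prop) [DecidablePred p] (n : ℕ) :
    {s : Multiset ℕ // (s.sum : ℤ) = n ∧ ∀ a ∈ s, 0 < a ∧ p a} ≃
      Nat.Partition.restricted n p where
  toFun s := ⟨⟨s.1, fun ha ↦ (s.2.2 _ ha).1, mod_cast s.2.1⟩,
    mem_filter.2 ⟨mem_univ _, fun a ha ↦ (s.2.2 a ha).2⟩⟩
  invFun π := ⟨π.1.parts, mod_cast π.1.parts_sum,
    fun a ha ↦ ⟨π.1.parts_pos ha, (mem_filter.1 π.2).2 a ha⟩⟩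

theorem restrictedPartitionCount_natCast [DecidablePred p] (n : ℕ) :
    restrictedPartitionCount p n = #(Nat.Partition.restricted n p) := by
  rw [restrictedPartitionCount, Nat.card_congr (equivRestrictedPartition p n),
    Nat.card_eq_fintype_card, Fintype.card_coe]

theorem restrictedPartitionCount_le_add {a : ℕ} (ha : 0 < a) (hpa : p a) (m : ℤ) :
    restrictedPartitionCount p m ≤ restrictedPartitionCount p (m + a) := by
  classical
  obtain hm | hm := lt_or_ge m 0
  · simp [restrictedPartitionCount_of_neg hm]
  lift m to ℕ using hm
  have : Finite {s : Multiset ℕ // (s.sum : ℤ) = (m : ℤ) + a ∧ ∀ b ∈ s, 0 < b ∧ p b} :=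
    .of_equiv _ (equivRestrictedPartition p (m + a)).symm
  refine Nat.card_le_card_of_injective (fun s ↦ ⟨a ::ₘ s.1, ?_, ?_⟩) fun s t h ↦ ?_
  · rw [Multiset.sum_cons, Nat.cast_add, s.2.1, add_comm]
  · exact Multiset.forall_mem_cons.2 ⟨⟨ha, hpa⟩, s.2.2⟩
  · exact Subtype.ext ((Multiset.cons_inj_right a).1 (congrArg Subtype.val h))

theorem coeff_mk_restrictedPartitionCount_mul_X_pow {R : Type*} [Semiring R] (n d : ℕ) :
    coeff n ((mk fun m : ℕ ↦ (restrictedPartitionCount p m : R)) * X ^ d) =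
      (restrictedPartitionCount p (n - d) : R) := by
  rw [coeff_mul_X_pow']
  split_ifs with h
  · rw [coeff_mk, Nat.cast_sub h]
  · rw [restrictedPartitionCount_of_neg (by omega), Nat.cast_zero]

theorem antitone_restrictedPartitionCount_sub_pentagonal (hp : ∀ a, ¬ 3 ∣ a → p a) (m : ℤ) :
    Antitone fun i : ℕ ↦ restrictedPartitionCount p (m - pentagonal (i + 1)) +
      restrictedPartitionCount p (m - pentagonal (-(i + 1))) := by
  refine antitone_nat_of_succ_le fun i ↦ add_le_add ?_ ?_
  · have hgap := natCast_pentagonal_add_one (i + 1)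
    refine (restrictedPartitionCount_le_add (a := 3 * (i + 1) + 1) (by omega)
      (hp _ (by omega)) _).trans_eq (congrArg _ ?_)
    push_cast
    linarith
  · have hgap := natCast_pentagonal_neg_add_one (i + 1)
    refine (restrictedPartitionCount_le_add (a := 3 * (i + 1) + 2) (by omega)
      (hp _ (by omega)) _).trans_eq (congrArg _ ?_)
    push_cast
    linarith

theorem truncated_pentagonal_sum_restrictedPartitionCount_nonneg (hp : ∀ a, ¬ 3 ∣ a → p a)
    (k n : ℕ) :
    0 ≤ (-1) ^ k * (∑ j ∈ Icc (-k : ℤ) k,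
        (-1) ^ j.natAbs * (restrictedPartitionCount p (n - pentagonal j) : ℤ) -
      coeff n ((mk fun m : ℕ ↦ (restrictedPartitionCount p m : ℤ)) * pentagonalSeries ℤ)) := by
  refine neg_one_pow_mul_sum_Icc_sub_hasSum_nonneg ?_ ?_ k
  · simpa only [Function.comp_def, Nat.cast_add] using (Nat.mono_cast (α := ℤ)).comp_antitone
      (antitone_restrictedPartitionCount_sub_pentagonal hp n)
  · simpa only [coeff_mk_restrictedPartitionCount_mul_X_pow] using
      hasSum_coeff_mul_pentagonalSeries (mk fun m : ℕ ↦ (restrictedPartitionCount p m : ℤ)) n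

end RestrictedPartitionCount

theorem stmt3_general {ℓ : ℕ} (hℓ : ℓ ≠ 0) (hdvd : 3 ∣ ℓ) (k : ℕ) (ρ : ℤ → ℤ)
    (hρ : ∀ i : ℤ, ρ (ℓ * (i * (3 * i - 1) / 2)) = (-1) ^ i.natAbs)
    (hρ₀ : ∀ m : ℤ, (∀ i : ℤ, m ≠ ℓ * (i * (3 * i - 1) / 2)) → ρ m = 0) (n : ℕ) :
    0 ≤ (-1) ^ k * (∑ j ∈ Icc (-k : ℤ) k, (-1) ^ j.natAbs *
      (restrictedPartitionCount (¬ ℓ ∣ ·) (n - j * (3 * j - 1) / 2) : ℤ) - ρ n) := by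
  have h := truncated_pentagonal_sum_restrictedPartitionCount_nonneg (p := (¬ ℓ ∣ ·))
    (fun a ha h ↦ ha (hdvd.trans h)) k n
  simpa only [natCast_pentagonal, restrictedPartitionCount_natCast,
    mk_card_restricted_not_dvd_mul_pentagonalSeries hℓ,
    ← eq_coeff_expand_pentagonalSeries hℓ hρ hρ₀] using h

/-- For `k ≥ 1` and `n ≥ 0`,
`(−1)^k · Σ_{j=−k}^{k} (−1)^j b_3(n − j(3j−1)/2) + (−1)^{k−1} ρ_3(n) ≥ 0`. -/
theorem stmt3 (k : ℕ) (hk : 1 ≤ k)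
    (ρ : ℤ → ℤ)
    (hρ1 : ∀ i : ℤ, ρ (3 * (i * (3 * i - 1) / 2)) = (-1) ^ i.natAbs)
    (hρ2 : ∀ m : ℤ, (∀ i : ℤ, m ≠ 3 * (i * (3 * i - 1) / 2)) → ρ m = 0)
    (n : ℤ) (hn : 0 ≤ n) :
    0 ≤ (-1 : ℤ) ^ k *
          (∑ j ∈ Finset.Icc (-(k : ℤ)) (k : ℤ),
            (-1 : ℤ) ^ j.natAbs * (b3 (n - j * (3 * j - 1) / 2) : ℤ))
        + (-1 : ℤ) ^ (k - 1) * ρ n := by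
  obtain ⟨k, rfl⟩ := Nat.exists_eq_add_of_le' hk
  lift n to ℕ using hn
  have h := stmt3_general three_ne_zero dvd_rfl (k + 1) ρ hρ1 hρ2 n
  simpa only [b3, restrictedPartitionCount, Nat.add_sub_cancel, mul_sub, pow_succ, mul_neg_one,
    neg_mul, sub_neg_eq_add] using h
end

section
/- For every integer k ≥ 1 there exists an integer N_k such that for all n ≥ N_k the following holds: if k is odd, then Q(n − T_{2k−2}) + Σ_{i=0}^{(k−3)/2} ( Q(n − T_{4i}) + Q(n − T_{4i+3}) ) ≥ Σ_{i=0}^{(k−3)/2} ( Q(n − T_{4i+1}) + Q(n − T_{4i+2}) ); and if k is even, then Q(n − T_{2k−1}) + Σ_{i=0}^{(k−2)/2} ( Q(n − T_{4i+1}) + Q(n − T_{4i+2}) ) ≥ Σ_{i=0}^{(k−2)/2} ( Q(n − T_{4i}) + Q(n − T_{4i+3}) ). (Equivalently, the coefficient c_k(n) is non-negative for all sufficiently large n.) -/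
/-- `Q m` is the number of partitions of `m` into distinct parts, with `Q m = 0`
for `m < 0`. A partition is a multiset of positive parts. -/
noncomputable def Q (m : ℤ) : ℕ :=
  Nat.card {s : Multiset ℕ // (s.sum : ℤ) = m ∧ s.Nodup ∧ ∀ a ∈ s, 0 < a}

/-- The `j`-th triangular number. -/
noncomputable def T (j : ℕ) : ℕ := j * (j + 1) / 2

/-!
The larger side has one term more than the smaller one, and every term is a shift `Q (n - j)`, so
it suffices that `Q (n - 1) ~ Q n`. By Euler's theorem `Q n` counts the partitions of `n` into odd
parts, and `Q n - Q (n - 1)` counts those among them without a part `1`. For any set of admissible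
parts containing `1` and some `c > 1`, the partitions without a part `1` are negligible: parts can
be traded for ones in many ways, and the number of ones in the result helps to undo the trade.
* If a part `b` occurs at least `E` times, trade `j < E` of its copies for `j * b` ones.
* If `c` occurs fewer than `E` times and there is a part `a > c * K`, trade `a` for `i < K` copies
  of `c` and `a - c * i` ones. The trade can be undone once the original multiplicity of `c` is
  known, so at most `E` trades have the same result.
* If all parts and all multiplicities are bounded, so is `n`.
-/

open Asymptotics Filter Finset

section PartitionsInto

/-- The partitions of `n` into parts satisfying `p`. They are encoded as multisets rather than as
terms of `n.Partition`, so that partitions of different numbers can be compared. -/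
def partitionsInto (p : ℕ → Prop) [DecidablePred p] (n : ℕ) : Finset (Multiset ℕ) :=
  (Nat.Partition.restricted n p).image Nat.Partition.parts

theorem partition_parts_injective (n : ℕ) :
    Function.Injective (Nat.Partition.parts : n.Partition → Multiset ℕ) :=
  fun _ _ ↦ Nat.Partition.ext

variable {p : ℕ → Prop} [DecidablePred p]

theorem mem_partitionsInto {n : ℕ} {s : Multiset ℕ} :
    s ∈ partitionsInto p n ↔ s.sum = n ∧ ∀ a ∈ s, 0 < a ∧ p a := by
  simp only [partitionsInto, Nat.Partition.restricted, mem_image, mem_filter_univ]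
  constructor
  · rintro ⟨π, hπ, rfl⟩
    exact ⟨π.parts_sum, fun a ha ↦ ⟨π.parts_pos ha, hπ a ha⟩⟩
  · rintro ⟨hsum, hs⟩
    exact ⟨⟨s, fun ha ↦ (hs _ ha).1, hsum⟩, fun a ha ↦ (hs a ha).2, rfl⟩

theorem sub_add_mem_partitionsInto {n : ℕ} {s t u : Multiset ℕ} (hs : s ∈ partitionsInto p n)
    (hts : t ≤ s) (hu : u ∈ partitionsInto p t.sum) : s - t + u ∈ partitionsInto p n := by
  rw [mem_partitionsInto] at *
  refine ⟨?_, fun a ha ↦ ?_⟩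
  · rw [Multiset.sum_add, hu.1, ← Multiset.sum_add, tsub_add_cancel_of_le hts, hs.1]
  · rcases Multiset.mem_add.1 ha with ha | ha
    · exact hs.2 a (Multiset.mem_of_le tsub_le_self ha)
    · exact hu.2 a ha

theorem replicate_one_mem_partitionsInto (h1 : p 1) (n : ℕ) :
    Multiset.replicate n 1 ∈ partitionsInto p n := by
  rw [mem_partitionsInto]
  refine ⟨by simp, fun a ha ↦ ?_⟩
  rw [Multiset.eq_of_mem_replicate ha]
  exact ⟨one_pos, h1⟩

theorem replicate_add_replicate_one_mem_partitionsInto (h1 : p 1) {c : ℕ} (hc : p c) (hc0 : 0 < c)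
    {n i : ℕ} (hi : c * i ≤ n) :
    Multiset.replicate i c + Multiset.replicate (n - c * i) 1 ∈ partitionsInto p n := by
  rw [mem_partitionsInto]
  refine ⟨?_, fun a ha ↦ ?_⟩
  · simp only [Multiset.sum_add, Multiset.sum_replicate, smul_eq_mul, mul_one, mul_comm i c]
    exact Nat.add_sub_cancel' hi
  · rcases Multiset.mem_add.1 ha with ha | ha <;> rw [Multiset.eq_of_mem_replicate ha]
    exacts [⟨hc0, hc⟩, ⟨one_pos, h1⟩]

theorem card_partitionsInto_succ (h1 : p 1) (n : ℕ) :
    #(partitionsInto p (n + 1)) =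
      #(partitionsInto p n) + #{s ∈ partitionsInto p (n + 1) | 1 ∉ s} := by
  rw [← card_filter_add_card_filter_not (s := partitionsInto p (n + 1)) (1 ∈ ·)]
  congr 1
  refine card_nbij' (Multiset.erase · 1) (1 ::ₘ ·) (fun s hs ↦ ?_) (fun s hs ↦ ?_)
    (fun s hs ↦ Multiset.cons_erase (mem_filter.1 hs).2) fun s _ ↦ Multiset.erase_cons_head 1 s
  · obtain ⟨hs, h1s⟩ := mem_filter.1 hs
    rw [mem_partitionsInto] at hs
    refine mem_partitionsInto.2 ⟨?_, fun a ha ↦ hs.2 a (Multiset.mem_of_mem_erase ha)⟩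
    exact Nat.add_left_cancel ((Multiset.sum_erase h1s).trans (hs.1.trans (add_comm n 1)))
  · have hs := mem_partitionsInto.1 hs
    refine mem_filter.2 ⟨mem_partitionsInto.2 ⟨?_, ?_⟩, Multiset.mem_cons_self 1 s⟩
    · rw [Multiset.sum_cons, hs.1, add_comm]
    · simpa [h1] using hs.2

theorem mul_card_filter_le_count_le (h1 : p 1) {b : ℕ} (hb : 0 < b) (E n : ℕ) :
    E * #{s ∈ partitionsInto p n | 1 ∉ s ∧ E ≤ s.count b} ≤ #(partitionsInto p n) := by
  rw [mul_comm, ← card_range E, ← card_product, card_range]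
  have replicate_le {s : Multiset ℕ} {j : ℕ} (hs : E ≤ s.count b) (hj : j < E) :
      Multiset.replicate j b ≤ s :=
    Multiset.le_count_iff_replicate_le.1 (hj.le.trans hs)
  have count_one_eq {s : Multiset ℕ} (hs : 1 ∉ s) (j : ℕ) :
      (s - Multiset.replicate j b + Multiset.replicate (j * b) 1).count 1 = j * b := by
    simp [Multiset.count_eq_zero_of_notMem hs]
  refine card_le_card_of_injOn
    (fun x ↦ x.1 - Multiset.replicate x.2 b + Multiset.replicate (x.2 * b) 1) ?_ ?_
  · rintro ⟨s, j⟩ hx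
    simp only [coe_product, Set.mem_prod, mem_coe, mem_filter, mem_range] at hx
    obtain ⟨⟨hs, -, hE⟩, hj⟩ := hx
    refine sub_add_mem_partitionsInto hs (replicate_le hE hj) ?_
    rw [Multiset.sum_replicate, smul_eq_mul]
    exact replicate_one_mem_partitionsInto h1 _
  · rintro ⟨s, j⟩ hx ⟨s', j'⟩ hx' heq
    simp only [coe_product, Set.mem_prod, mem_coe, mem_filter, mem_range] at hx hx' heq
    obtain ⟨⟨-, hs, hE⟩, hj⟩ := hx
    obtain ⟨⟨-, hs', hE'⟩, hj'⟩ := hx'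
    obtain rfl : j = j' := by
      have hcount := congrArg (Multiset.count 1) heq
      rw [count_one_eq hs, count_one_eq hs'] at hcount
      exact Nat.eq_of_mul_eq_mul_right hb hcount
    rw [(tsub_left_inj (replicate_le hE hj) (replicate_le hE' hj')).1 (add_right_cancel heq)]

/-- The multiset `s` with a part `a` traded for `i` parts `c` and `a - c * i` ones. This preserves
the sum if `a ∈ s` and `c * i ≤ a`; otherwise the subtractions truncate. -/
def tradePart (c : ℕ) (s : Multiset ℕ) (a i : ℕ) : Multiset ℕ :=
  s - {a} + (Multiset.replicate i c + Multiset.replicate (a - c * i) 1)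

theorem tradePart_mem_partitionsInto (h1 : p 1) {c : ℕ} (hc : p c) (hc0 : 0 < c) {n : ℕ}
    {s : Multiset ℕ} (hs : s ∈ partitionsInto p n) {a i : ℕ} (ha : a ∈ s) (hi : c * i ≤ a) :
    tradePart c s a i ∈ partitionsInto p n := by
  refine sub_add_mem_partitionsInto hs (Multiset.singleton_le.2 ha) ?_
  rw [Multiset.sum_singleton]
  exact replicate_add_replicate_one_mem_partitionsInto h1 hc hc0 hi

theorem count_one_tradePart {c : ℕ} (hc : c ≠ 1) {s : Multiset ℕ} (hs : 1 ∉ s) (a i : ℕ) :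
    (tradePart c s a i).count 1 = a - c * i := by
  have herase : 1 ∉ s.erase a := mt Multiset.mem_of_mem_erase hs
  simp [tradePart, Multiset.count_replicate, hc, herase]

theorem count_tradePart {c : ℕ} (hc : c ≠ 1) {a : ℕ} (hca : c ≠ a) (s : Multiset ℕ) (i : ℕ) :
    (tradePart c s a i).count c = s.count c + i := by
  simp [tradePart, Multiset.count_replicate, hca, hc.symm]

theorem tradePart_inj {c : ℕ} (hc : c ≠ 1) {s s' : Multiset ℕ} (hs : 1 ∉ s) (hs' : 1 ∉ s')
    (hcount : s.count c = s'.count c) {a a' i i' : ℕ} (ha : a ∈ s) (ha' : a' ∈ s') (hca : c ≠ a)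
    (hca' : c ≠ a') (hi : c * i ≤ a) (hi' : c * i' ≤ a') :
    tradePart c s a i = tradePart c s' a' i' ↔ s = s' ∧ a = a' ∧ i = i' := by
  refine ⟨fun heq ↦ ?_, by rintro ⟨rfl, rfl, rfl⟩; rfl⟩
  obtain rfl : i = i' := by
    have := congrArg (Multiset.count c) heq
    rw [count_tradePart hc hca, count_tradePart hc hca', hcount] at this
    exact Nat.add_left_cancel this
  obtain rfl : a = a' := by
    have := congrArg (Multiset.count 1) heq
    rw [count_one_tradePart hc hs, count_one_tradePart hc hs'] at this
    omega
  have hsub : s - {a} = s' - {a} := add_right_cancel heq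
  have hss := (tsub_left_inj (Multiset.singleton_le.2 ha) (Multiset.singleton_le.2 ha')).1 hsub
  exact ⟨hss, rfl, rfl⟩

theorem mul_card_filter_count_lt_le (h1 : p 1) {c : ℕ} (hc : p c) (hc1 : 1 < c) (E K n : ℕ) :
    K * #{s ∈ partitionsInto p n | (1 ∉ s ∧ ¬ ∀ a ∈ s, a ≤ c * K) ∧ s.count c < E} ≤
      E * #(partitionsInto p n) := by
  set F := {s ∈ partitionsInto p n | (1 ∉ s ∧ ¬ ∀ a ∈ s, a ≤ c * K) ∧ s.count c < E}
  have hlarge : ∀ s ∈ F, ∃ a ∈ s, c * K < a := fun s hs ↦ by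
    simpa using (mem_filter.1 hs).2.1.2
  choose! a ha hKa using hlarge
  have mul_le {s : Multiset ℕ} {i : ℕ} (hs : s ∈ F) (hi : i < K) : c * i ≤ a s :=
    (Nat.mul_le_mul_left c hi.le).trans (hKa s hs).le
  have ne_part {s : Multiset ℕ} {i : ℕ} (hs : s ∈ F) (hi : i < K) : c ≠ a s :=
    ((Nat.le_mul_of_pos_right c (Nat.zero_lt_of_lt hi)).trans_lt (hKa s hs)).ne
  calc
    K * #F = #(F ×ˢ range K) := by rw [card_product, card_range, mul_comm]
    _ ≤ #(partitionsInto p n ×ˢ range E) := by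
      refine card_le_card_of_injOn (fun x ↦ (tradePart c x.1 (a x.1) x.2, x.1.count c)) ?_ ?_
      · rintro ⟨s, i⟩ hx
        obtain ⟨hs, hi⟩ : s ∈ F ∧ i < K := by simpa using hx
        obtain ⟨hsn, -, hsc⟩ := mem_filter.1 hs
        exact mem_product.2 ⟨tradePart_mem_partitionsInto h1 hc (one_pos.trans hc1) hsn (ha s hs)
          (mul_le hs hi), mem_range.2 hsc⟩
      · rintro ⟨s, i⟩ hx ⟨s', i'⟩ hx' heq
        obtain ⟨hs, hi⟩ : s ∈ F ∧ i < K := by simpa using hx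
        obtain ⟨hs', hi'⟩ : s' ∈ F ∧ i' < K := by simpa using hx'
        obtain ⟨htrade, hcount⟩ := Prod.mk.inj heq
        obtain ⟨rfl, -, rfl⟩ := (tradePart_inj hc1.ne' (mem_filter.1 hs).2.1.1
          (mem_filter.1 hs').2.1.1 hcount (ha s hs) (ha s' hs') (ne_part hs hi) (ne_part hs' hi')
          (mul_le hs hi) (mul_le hs' hi')).1 htrade
        rfl
    _ = E * #(partitionsInto p n) := by rw [card_product, card_range, mul_comm]

theorem exists_mul_card_filter_not_forall_le_le (h1 : p 1) {c : ℕ} (hc : p c) (hc1 : 1 < c)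
    (D : ℕ) :
    ∃ M, ∀ n, D * #{s ∈ partitionsInto p n | 1 ∉ s ∧ ¬ ∀ a ∈ s, a ≤ M} ≤
      #(partitionsInto p n) := by
  rcases D.eq_zero_or_pos with rfl | hD
  · simp
  set K := 2 * D * (2 * D)
  refine ⟨c * K, fun n ↦ ?_⟩
  have hfew : 2 * D *
      #{s ∈ partitionsInto p n | (1 ∉ s ∧ ¬ ∀ a ∈ s, a ≤ c * K) ∧ s.count c < 2 * D} ≤
        #(partitionsInto p n) := by
    refine Nat.le_of_mul_le_mul_left (c := 2 * D) ?_ (by positivity)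
    rw [← mul_assoc]
    exact mul_card_filter_count_lt_le h1 hc hc1 (2 * D) K n
  have hmany : 2 * D *
      #{s ∈ partitionsInto p n | (1 ∉ s ∧ ¬ ∀ a ∈ s, a ≤ c * K) ∧ ¬ s.count c < 2 * D} ≤
        #(partitionsInto p n) := by
    refine le_trans ?_ (mul_card_filter_le_count_le h1 (one_pos.trans hc1) (2 * D) n)
    gcongr 2 * D * #?_
    exact monotone_filter_right _ fun s _ hs ↦ ⟨hs.1.1, not_lt.1 hs.2⟩
  rw [← card_filter_add_card_filter_not (Multiset.count c · < 2 * D), filter_filter,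
    filter_filter]
  linarith

theorem sum_le_of_forall_le_of_forall_count_le {s : Multiset ℕ} {M E : ℕ} (hM : ∀ a ∈ s, a ≤ M)
    (hE : ∀ a ∈ s, s.count a ≤ E) : s.sum ≤ (M + 1) * (E * M) := by
  have hsub : s.toFinset ⊆ range (M + 1) := fun a ha ↦
    mem_range_succ_iff.2 (hM a (Multiset.mem_toFinset.1 ha))
  calc
    s.sum = ∑ a ∈ s.toFinset, s.count a * a := sum_multiset_count s
    _ ≤ #s.toFinset * (E * M) := sum_le_card_nsmul _ _ _ fun a ha ↦ by
      rw [Multiset.mem_toFinset] at ha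
      exact Nat.mul_le_mul (hE a ha) (hM a ha)
    _ ≤ (M + 1) * (E * M) := by
      gcongr
      simpa using card_le_card hsub

theorem eventually_mul_card_filter_forall_le_le (h1 : p 1) (D M : ℕ) :
    ∀ᶠ n in atTop, D * #{s ∈ partitionsInto p n | 1 ∉ s ∧ ∀ a ∈ s, a ≤ M} ≤
      #(partitionsInto p n) := by
  set E := D * (M + 1) with hE
  filter_upwards [eventually_gt_atTop ((M + 1) * (E * M))] with n hn
  have hcover : {s ∈ partitionsInto p n | 1 ∉ s ∧ ∀ a ∈ s, a ≤ M} ⊆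
      (Icc 1 M).biUnion fun b ↦ {s ∈ partitionsInto p n | 1 ∉ s ∧ E ≤ s.count b} := by
    intro s hs
    obtain ⟨hsn, h1s, hsM⟩ := mem_filter.1 hs
    obtain ⟨hsum, hspos⟩ := mem_partitionsInto.1 hsn
    obtain ⟨b, hb, hbE⟩ : ∃ b ∈ s, E ≤ s.count b := by
      by_contra! hlt
      have := sum_le_of_forall_le_of_forall_count_le hsM fun a ha ↦ (hlt a ha).le
      omega
    exact mem_biUnion.2
      ⟨b, mem_Icc.2 ⟨(hspos b hb).1, hsM b hb⟩, mem_filter.2 ⟨hsn, h1s, hbE⟩⟩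
  refine Nat.le_of_mul_le_mul_left ?_ M.succ_pos
  calc
    (M + 1) * (D * #{s ∈ partitionsInto p n | 1 ∉ s ∧ ∀ a ∈ s, a ≤ M})
      = E * #{s ∈ partitionsInto p n | 1 ∉ s ∧ ∀ a ∈ s, a ≤ M} := by rw [hE]; ring
    _ ≤ E * ∑ b ∈ Icc 1 M, #{s ∈ partitionsInto p n | 1 ∉ s ∧ E ≤ s.count b} := by
      gcongr
      exact (card_le_card hcover).trans card_biUnion_le
    _ = ∑ b ∈ Icc 1 M, E * #{s ∈ partitionsInto p n | 1 ∉ s ∧ E ≤ s.count b} := mul_sum ..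
    _ ≤ #(Icc 1 M) * #(partitionsInto p n) := sum_le_card_nsmul _ _ _ fun b hb ↦
      mul_card_filter_le_count_le h1 (mem_Icc.1 hb).1 E n
    _ ≤ (M + 1) * #(partitionsInto p n) := by
      gcongr
      simp

theorem isLittleO_card_filter_one_notMem (h1 : p 1) {c : ℕ} (hc : p c) (hc1 : 1 < c) :
    (fun n ↦ (#{s ∈ partitionsInto p n | 1 ∉ s} : ℝ)) =o[atTop]
      fun n ↦ (#(partitionsInto p n) : ℝ) := by
  refine isLittleO_iff_nat_mul_le.2 fun D ↦ ?_
  obtain ⟨M, hM⟩ := exists_mul_card_filter_not_forall_le_le h1 hc hc1 (2 * D)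
  filter_upwards [eventually_mul_card_filter_forall_le_le h1 (2 * D) M] with n hn
  have hbound : D * #{s ∈ partitionsInto p n | 1 ∉ s} ≤ #(partitionsInto p n) := by
    rw [← card_filter_add_card_filter_not (fun s : Multiset ℕ ↦ ∀ a ∈ s, a ≤ M), filter_filter,
      filter_filter]
    linarith [hM n]
  simpa only [Real.norm_natCast] using mod_cast hbound

theorem isEquivalent_card_partitionsInto_sub_one (h1 : p 1) {c : ℕ} (hc : p c) (hc1 : 1 < c) :
    (fun n ↦ (#(partitionsInto p (n - 1)) : ℝ)) ~[atTop]
      fun n ↦ (#(partitionsInto p n) : ℝ) := by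
  refine (isLittleO_card_filter_one_notMem h1 hc hc1).neg_left.congr' ?_ .rfl
  filter_upwards [eventually_ge_atTop 1] with n hn
  obtain ⟨m, rfl⟩ := Nat.exists_eq_add_of_le' hn
  simp [card_partitionsInto_succ h1 m]

end PartitionsInto

section Shift

variable {u : ℤ → ℝ}

theorem isEquivalent_sub_natCast (hu : (fun n ↦ u (n - 1)) ~[atTop] u) (j : ℕ) :
    (fun n ↦ u (n - j)) ~[atTop] u := by
  induction j with
  | zero => simpa using IsEquivalent.refl
  | succ j ih =>
    have hshift : Tendsto (fun n : ℤ ↦ n - 1) atTop atTop :=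
      tendsto_atTop_add_const_right _ _ tendsto_id
    refine .trans ?_ hu
    simpa [Function.comp_def, sub_sub, add_comm] using ih.comp_tendsto hshift

theorem isLittleO_sum_sub_natCast (hu : (fun n ↦ u (n - 1)) ~[atTop] u) {ι : Type*}
    (s : Finset ι) (f : ι → ℕ) :
    (fun n ↦ ∑ i ∈ s, u (n - f i) - #s * u n) =o[atTop] u := by
  have := IsLittleO.fun_sum (s := s) fun i _ ↦ (isEquivalent_sub_natCast hu (f i)).isLittleO
  simpa using this

theorem eventually_sum_sub_natCast_le (hu₀ : ∀ n, 0 ≤ u n) (hu : (fun n ↦ u (n - 1)) ~[atTop] u)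
    {ι κ : Type*} {s : Finset ι} {t : Finset κ} (hst : #s < #t) (f : ι → ℕ) (g : κ → ℕ) :
    ∀ᶠ n in atTop, ∑ i ∈ s, u (n - f i) ≤ ∑ j ∈ t, u (n - g j) := by
  have hdiff := (isLittleO_sum_sub_natCast hu s f).sub (isLittleO_sum_sub_natCast hu t g)
  filter_upwards [hdiff.bound one_pos] with n hn
  rw [one_mul, Real.norm_of_nonneg (hu₀ n)] at hn
  have hgap : (#s + 1 : ℝ) * u n ≤ #t * u n :=
    mul_le_mul_of_nonneg_right (mod_cast hst) (hu₀ n)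
  linarith [(le_abs_self _).trans hn]

end Shift

theorem Q_natCast (n : ℕ) : Q n = #(partitionsInto (¬ Even ·) n) := by
  have hQ : Q n = #((Nat.Partition.distincts n).image Nat.Partition.parts) := by
    refine Nat.subtype_card _ fun s ↦ ?_
    simp only [mem_image, Nat.Partition.distincts, mem_filter_univ, Nat.cast_inj]
    constructor
    · rintro ⟨π, hπ, rfl⟩
      exact ⟨π.parts_sum, hπ, fun _ ↦ π.parts_pos⟩
    · rintro ⟨hsum, hnodup, hpos⟩
      exact ⟨⟨s, hpos _, hsum⟩, hnodup, rfl⟩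
  rw [hQ, partitionsInto, card_image_of_injective _ (partition_parts_injective n),
    card_image_of_injective _ (partition_parts_injective n),
    ← Nat.Partition.card_odds_eq_card_distincts, Nat.Partition.odds]

theorem isEquivalent_Q_sub_one : (fun n ↦ (Q (n - 1) : ℝ)) ~[atTop] fun n ↦ (Q n : ℝ) := by
  have hodd := isEquivalent_card_partitionsInto_sub_one (p := (¬ Even ·)) (c := 3)
    (by decide) (by decide) (by decide)
  rw [← Nat.map_cast_int_atTop]
  refine isLittleO_map.2 (hodd.isLittleO.congr' ?_ ?_)
  · filter_upwards [eventually_ge_atTop 1] with n hn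
    simp only [Pi.sub_apply, Function.comp_apply, ← Q_natCast, Nat.cast_sub hn, Nat.cast_one]
  · exact .of_forall fun n ↦ by simp [Q_natCast]

theorem eventually_sum_Q_le_Q_add_sum_Q (K t : ℕ) (a b c d : ℕ → ℕ) :
    ∀ᶠ n : ℤ in atTop, ∑ i ∈ range K, (Q (n - a i) + Q (n - b i)) ≤
      Q (n - t) + ∑ i ∈ range K, (Q (n - c i) + Q (n - d i)) := by
  have hcard : #((range K).disjSum (range K)) <
      #(({()} : Finset Unit).disjSum ((range K).disjSum (range K))) := by
    simp
  filter_upwards [eventually_sum_sub_natCast_le (fun n ↦ (Q n).cast_nonneg)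
    isEquivalent_Q_sub_one hcard (Sum.elim a b) (Sum.elim (fun _ ↦ t) (Sum.elim c d))] with n hn
  simp only [sum_disjSum, sum_singleton, Sum.elim_inl, Sum.elim_inr] at hn
  simp only [sum_add_distrib]
  exact_mod_cast hn

/-- For every `k ≥ 1` there is `N_k` such that for all `n ≥ N_k`: if `k` is odd,
`Q(n−T_{2k−2}) + Σ_{i=0}^{(k−3)/2} (Q(n−T_{4i}) + Q(n−T_{4i+3}))
  ≥ Σ_{i=0}^{(k−3)/2} (Q(n−T_{4i+1}) + Q(n−T_{4i+2}))`,
and if `k` is even,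
`Q(n−T_{2k−1}) + Σ_{i=0}^{(k−2)/2} (Q(n−T_{4i+1}) + Q(n−T_{4i+2}))
  ≥ Σ_{i=0}^{(k−2)/2} (Q(n−T_{4i}) + Q(n−T_{4i+3}))`. -/
theorem stmt5 (k : ℕ) (hk : 1 ≤ k) :
    ∃ N : ℤ, ∀ n : ℤ, N ≤ n →
      (Odd k →
        ∑ i ∈ Finset.range ((k - 1) / 2),
            (Q (n - (T (4 * i + 1) : ℤ)) + Q (n - (T (4 * i + 2) : ℤ)))
          ≤ Q (n - (T (2 * k - 2) : ℤ)) +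
            ∑ i ∈ Finset.range ((k - 1) / 2),
              (Q (n - (T (4 * i) : ℤ)) + Q (n - (T (4 * i + 3) : ℤ)))) ∧
      (Even k →
        ∑ i ∈ Finset.range (k / 2),
            (Q (n - (T (4 * i) : ℤ)) + Q (n - (T (4 * i + 3) : ℤ)))
          ≤ Q (n - (T (2 * k - 1) : ℤ)) +
            ∑ i ∈ Finset.range (k / 2),
              (Q (n - (T (4 * i + 1) : ℤ)) + Q (n - (T (4 * i + 2) : ℤ)))) := by
  obtain ⟨N, hN⟩ := eventually_atTop.1 <|
    (eventually_sum_Q_le_Q_add_sum_Q ((k - 1) / 2) (T (2 * k - 2)) (fun i ↦ T (4 * i + 1))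
      (fun i ↦ T (4 * i + 2)) (fun i ↦ T (4 * i)) (fun i ↦ T (4 * i + 3))).and
    (eventually_sum_Q_le_Q_add_sum_Q (k / 2) (T (2 * k - 1)) (fun i ↦ T (4 * i))
      (fun i ↦ T (4 * i + 3)) (fun i ↦ T (4 * i + 1)) (fun i ↦ T (4 * i + 2)))
  exact ⟨N, fun n hn ↦ ⟨fun _ ↦ (hN n hn).1, fun _ ↦ (hN n hn).2⟩⟩
end

section
/- Let m and s be integers with m ≥ 2 and 0 < s < m, and let q be a complex number with |q| < 1. Then ( ∏_{n=0}^{∞} (1 − q^{s+2mn})(1 − q^{2m−s+2mn})(1 − q^{2m+2mn})(1 − q^{2m−2s+4mn})(1 − q^{2m+2s+4mn}) ) / ( ∏_{n=0}^{∞} (1 − q^{s+mn})(1 − q^{m−s+mn}) ) = Σ_{n∈ℤ} q^{n(mn+s)}. -/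
/-!
In the base `p = q ^ m` with `x = q ^ s` and `y = q ^ (m - s)`, dissecting `(x, y; p)_∞` by the
parity of the index and using `(a²; p²)_∞ = (a, -a; p)_∞` collapses the quotient to
`(p², -x p, -y; p²)_∞`. By the Jacobi triple product this is `∑ p ^ (n²) x ^ n`.

The triple product is the limit `N → ∞` of its finite form, in which
`(-z q, -z⁻¹ q; q²)_N` is expanded in powers of `z`: the coefficient of `q ^ (j²) z ^ j` is the
Gaussian binomial coefficient `[2N, N + j]` in base `q²`, which tends to `1 / (q²; q²)_∞`.
-/

open Filter Topology

section Finite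

variable {K : Type*} [Field K]

/-- The finite `q`-Pochhammer symbol `(a; q)_n`, the partial product of `(a; q)_∞`. -/
def qPochhammer (a q : K) (n : ℕ) : K := ∏ i ∈ Finset.range n, (1 - a * q ^ i)

lemma qPochhammer_zero (a q : K) : qPochhammer a q 0 = 1 := Finset.prod_range_zero _

lemma qPochhammer_succ (a q : K) (n : ℕ) :
    qPochhammer a q (n + 1) = qPochhammer a q n * (1 - a * q ^ n) :=
  Finset.prod_range_succ _ n

/-- The reciprocal `1 / (q; q)_k`, extended by zero to negative `k` (where `(q; q)_k` has a pole),
so that its recurrence in `k` holds on all of `ℤ`. -/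
def invQFactorial (q : K) : ℤ → K
  | .ofNat n => (qPochhammer q q n)⁻¹
  | .negSucc _ => 0

lemma invQFactorial_natCast (q : K) (n : ℕ) : invQFactorial q n = (qPochhammer q q n)⁻¹ := rfl

lemma invQFactorial_of_neg (q : K) : ∀ {k : ℤ}, k < 0 → invQFactorial q k = 0
  | .negSucc _, _ => rfl

lemma invQFactorial_sub_one {q : K} (hq : ¬IsOfFinOrder q) (k : ℤ) :
    invQFactorial q (k - 1) = (1 - q ^ k) * invQFactorial q k := by
  obtain hk | rfl | hk := lt_trichotomy k 0
  · rw [invQFactorial_of_neg q hk, invQFactorial_of_neg q (by omega), mul_zero]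
  · simp [invQFactorial_of_neg]
  · obtain ⟨n, rfl⟩ : ∃ n : ℕ, k = (n + 1 : ℕ) := ⟨(k - 1).toNat, by omega⟩
    have hn : 1 - q * q ^ n ≠ 0 := fun h ↦
      hq (isOfFinOrder_iff_pow_eq_one.2 ⟨n + 1, n.succ_pos, by rw [pow_succ', sub_eq_zero.1 h]⟩)
    rw [Nat.cast_succ, add_sub_cancel_right, ← Nat.cast_succ, zpow_natCast, invQFactorial_natCast,
      invQFactorial_natCast, qPochhammer_succ, pow_succ', mul_inv, mul_left_comm,
      mul_inv_cancel₀ hn, mul_one]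

/-- The Gaussian binomial coefficient `[2N, N + j]` in base `q` (not a root of unity), indexed
symmetrically by `-N ≤ j ≤ N` and vanishing for all other integers `j`: these are the coefficients
of the finite triple product. -/
def centralQBinom (q : K) (N : ℕ) (j : ℤ) : K :=
  qPochhammer q q (2 * N) * invQFactorial q (N + j) * invQFactorial q (N - j)

lemma centralQBinom_zero_zero (q : K) : centralQBinom q 0 0 = 1 := by
  simp [centralQBinom, invQFactorial, qPochhammer]

lemma centralQBinom_zero_of_ne (q : K) {j : ℤ} (hj : j ≠ 0) : centralQBinom q 0 j = 0 := by
  obtain h | h := hj.lt_or_gt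
  · simp [centralQBinom, invQFactorial_of_neg q h]
  · simp [centralQBinom, invQFactorial_of_neg q (neg_lt_zero.2 h)]

lemma centralQBinom_succ {q : K} (hq₀ : q ≠ 0) (hq : ¬IsOfFinOrder q) (N : ℕ) (j : ℤ) :
    centralQBinom q (N + 1) j = (1 + q ^ (2 * N + 1)) * centralQBinom q N j +
      q ^ (N + 1 - j) * centralQBinom q N (j - 1) +
      q ^ (N + 1 + j) * centralQBinom q N (j + 1) := by
  have hplus := invQFactorial_sub_one hq (N + 1 + j)
  have hminus := invQFactorial_sub_one hq (N + 1 - j)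
  have hplus' := invQFactorial_sub_one hq (N + j)
  have hminus' := invQFactorial_sub_one hq (N - j)
  rw [show (N + 1 + j - 1 : ℤ) = N + j by ring] at hplus
  rw [show (N + 1 - j - 1 : ℤ) = N - j by ring] at hminus
  have hA : q ^ (N + 1 + j : ℤ) = q * q ^ (N + j : ℤ) := by rw [← zpow_one_add₀ hq₀]; ring_nf
  have hB : q ^ (N + 1 - j : ℤ) = q * q ^ (N - j : ℤ) := by rw [← zpow_one_add₀ hq₀]; ring_nf
  have hAB : q ^ (2 * N) = q ^ (N + j : ℤ) * q ^ (N - j : ℤ) := by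
    rw [← zpow_add₀ hq₀, ← zpow_natCast]; push_cast; ring_nf
  simp only [centralQBinom, Nat.cast_succ, mul_add_one, qPochhammer_succ,
    show (N + (j - 1) : ℤ) = N + j - 1 by ring, show (N - (j - 1) : ℤ) = N + 1 - j by ring,
    show (N + (j + 1) : ℤ) = N + 1 + j by ring, show (N - (j + 1) : ℤ) = N - j - 1 by ring]
  rw [hplus', hminus', hplus, hminus, hA, hB, pow_succ, hAB]
  ring

lemma zpow_sq_mul_zpow_add_one {q z : K} (hq₀ : q ≠ 0) (hz : z ≠ 0) (j : ℤ) :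
    q ^ ((j + 1) ^ 2) * z ^ (j + 1) = z * q ^ (2 * j + 1) * (q ^ (j ^ 2) * z ^ j) := by
  rw [show (j + 1) ^ 2 = j ^ 2 + (2 * j + 1) by ring, zpow_add₀ hq₀, zpow_add_one₀ hz]
  ring

lemma centralQBinom_succ_mul_zpow {q z : K} (hq₀ : q ≠ 0) (hq : ¬IsOfFinOrder q) (hz : z ≠ 0)
    (N : ℕ) (j : ℤ) :
    centralQBinom (q ^ 2) (N + 1) j * (q ^ (j ^ 2) * z ^ j) =
      (1 + (q ^ 2) ^ (2 * N + 1)) * (centralQBinom (q ^ 2) N j * (q ^ (j ^ 2) * z ^ j)) +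
      z * q ^ (2 * N + 1) *
        (centralQBinom (q ^ 2) N (j - 1) * (q ^ ((j - 1) ^ 2) * z ^ (j - 1))) +
      z⁻¹ * q ^ (2 * N + 1) *
        (centralQBinom (q ^ 2) N (j + 1) * (q ^ ((j + 1) ^ 2) * z ^ (j + 1))) := by
  have hpow (k i : ℤ) (h : 2 * k + i = 2 * N + 1) : (q ^ 2) ^ k * q ^ i = q ^ (2 * N + 1) := by
    rw [← zpow_natCast q 2, ← zpow_mul, ← zpow_add₀ hq₀, ← zpow_natCast q (2 * N + 1)]
    exact congrArg (q ^ ·) (mod_cast h)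
  have hsub : (q ^ 2) ^ (N + 1 - j : ℤ) * (q ^ (j ^ 2) * z ^ j) =
      z * q ^ (2 * N + 1) * (q ^ ((j - 1) ^ 2) * z ^ (j - 1)) := by
    have h := zpow_sq_mul_zpow_add_one hq₀ hz (j - 1)
    rw [sub_add_cancel] at h
    rw [h, ← hpow (N + 1 - j) (2 * (j - 1) + 1) (by ring)]
    ring
  have hadd : (q ^ 2) ^ (N + 1 + j : ℤ) * (q ^ (j ^ 2) * z ^ j) =
      z⁻¹ * q ^ (2 * N + 1) * (q ^ ((j + 1) ^ 2) * z ^ (j + 1)) := by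
    have h : q ^ (-(2 * j + 1)) * q ^ (2 * j + 1) = 1 := by rw [← zpow_add₀ hq₀]; simp
    rw [zpow_sq_mul_zpow_add_one hq₀ hz, ← hpow (N + 1 + j) (-(2 * j + 1)) (by ring)]
    calc (q ^ 2) ^ (N + 1 + j : ℤ) * (q ^ (j ^ 2) * z ^ j)
        = z⁻¹ * z * (q ^ 2) ^ (N + 1 + j : ℤ) * (q ^ (-(2 * j + 1)) * q ^ (2 * j + 1)) *
            (q ^ (j ^ 2) * z ^ j) := by rw [inv_mul_cancel₀ hz, h, one_mul, mul_one]
      _ = _ := by ring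
  rw [centralQBinom_succ (pow_ne_zero 2 hq₀) (by simpa [isOfFinOrder_pow] using hq)]
  linear_combination centralQBinom (q ^ 2) N (j - 1) * hsub +
    centralQBinom (q ^ 2) N (j + 1) * hadd

-- The support is finite; `HasSum` is used because it makes the shifts of the index immediate.
theorem hasSum_finite_jacobi_triple_product [TopologicalSpace K] [IsTopologicalSemiring K] {q z : K}
    (hq₀ : q ≠ 0) (hq : ¬IsOfFinOrder q) (hz : z ≠ 0) (N : ℕ) :
    HasSum (fun j : ℤ ↦ centralQBinom (q ^ 2) N j * (q ^ (j ^ 2) * z ^ j))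
      (qPochhammer (-(z * q)) (q ^ 2) N * qPochhammer (-(z⁻¹ * q)) (q ^ 2) N) := by
  induction N with
  | zero =>
    have h := hasSum_single (f := fun j : ℤ ↦ centralQBinom (q ^ 2) 0 j * (q ^ (j ^ 2) * z ^ j)) 0
      fun j hj ↦ by rw [centralQBinom_zero_of_ne _ hj, zero_mul]
    simpa [centralQBinom_zero_zero, qPochhammer_zero] using h
  | succ N ih =>
    have hsub := ((Equiv.subRight (1 : ℤ)).hasSum_iff.2 ih).mul_left (z * q ^ (2 * N + 1))
    have hadd := ((Equiv.addRight (1 : ℤ)).hasSum_iff.2 ih).mul_left (z⁻¹ * q ^ (2 * N + 1))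
    have hprod : (1 - -(z * q) * (q ^ 2) ^ N) * (1 - -(z⁻¹ * q) * (q ^ 2) ^ N) =
        1 + (q ^ 2) ^ (2 * N + 1) + z * q ^ (2 * N + 1) + z⁻¹ * q ^ (2 * N + 1) := by
      linear_combination q ^ (4 * N + 2) * mul_inv_cancel₀ hz
    rw [funext (centralQBinom_succ_mul_zpow hq₀ hq hz N), qPochhammer_succ, qPochhammer_succ,
      mul_mul_mul_comm, hprod,
      mul_comm (qPochhammer _ _ N * qPochhammer _ _ N), add_mul, add_mul]
    exact ((ih.mul_left _).add hsub).add hadd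

end Finite

section Infinite

variable {𝕜 : Type*} [NormedField 𝕜]

/-- The infinite `q`-Pochhammer symbol `(a; q)_∞`, in which both sides of the theta product
identities are written; it is meant for `‖q‖ < 1`, where the product converges. -/
noncomputable def qPochhammerInf (a q : 𝕜) : 𝕜 := ∏' n : ℕ, (1 - a * q ^ n)

lemma qPochhammerInf_zero_left (q : 𝕜) : qPochhammerInf 0 q = 1 := by
  simp [qPochhammerInf]

lemma summable_norm_mul_pow (a : 𝕜) {q : 𝕜} (hq : ‖q‖ < 1) :
    Summable fun n : ℕ ↦ ‖a * q ^ n‖ := by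
  simpa only [norm_mul, norm_pow] using
    (summable_geometric_of_lt_one (norm_nonneg q) hq).mul_left ‖a‖

lemma norm_pow_lt_one {q : 𝕜} (hq : ‖q‖ < 1) {n : ℕ} (hn : n ≠ 0) : ‖q ^ n‖ < 1 := by
  simpa only [norm_pow] using pow_lt_one₀ (norm_nonneg q) hq hn

lemma not_isOfFinOrder_of_norm_lt_one {q : 𝕜} (hq : ‖q‖ < 1) : ¬IsOfFinOrder q :=
  fun h ↦ hq.ne h.norm_eq_one

lemma summable_norm_pow_sq_mul_pow {q : 𝕜} (hq : ‖q‖ < 1) (z : 𝕜) :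
    Summable fun n : ℕ ↦ ‖q ^ (n ^ 2) * z ^ n‖ := by
  have hratio : Tendsto (fun n : ℕ ↦ ‖z * q * (q ^ 2) ^ n‖) atTop (𝓝 0) :=
    (summable_norm_mul_pow (z * q) (norm_pow_lt_one hq two_ne_zero)).tendsto_atTop_zero
  refine summable_of_ratio_norm_eventually_le (r := 1 / 2) (by norm_num) ?_
  filter_upwards [hratio.eventually_le_const one_half_pos] with n hn
  have hstep : q ^ ((n + 1) ^ 2) * z ^ (n + 1) = z * q * (q ^ 2) ^ n * (q ^ (n ^ 2) * z ^ n) := by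
    ring
  rw [norm_norm, norm_norm, hstep, norm_mul]
  gcongr

lemma summable_norm_zpow_sq_mul_zpow {q : 𝕜} (hq : ‖q‖ < 1) (z : 𝕜) :
    Summable fun j : ℤ ↦ ‖q ^ (j ^ 2) * z ^ j‖ := by
  have h (w : 𝕜) : Summable fun n : ℕ ↦ ‖q ^ ((n : ℤ) ^ 2) * w ^ (n : ℤ)‖ :=
    mod_cast summable_norm_pow_sq_mul_pow hq w
  refine Summable.of_nat_of_neg (h z) ?_
  simpa only [neg_sq, zpow_neg, inv_zpow] using h z⁻¹

variable [CompleteSpace 𝕜]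

lemma hasProd_qPochhammerInf (a : 𝕜) {q : 𝕜} (hq : ‖q‖ < 1) :
    HasProd (fun n : ℕ ↦ 1 - a * q ^ n) (qPochhammerInf a q) := by
  have h : Summable fun n : ℕ ↦ ‖-(a * q ^ n)‖ := by
    simpa only [norm_neg] using summable_norm_mul_pow a hq
  simpa only [qPochhammerInf, sub_eq_add_neg] using (multipliable_one_add_of_summable h).hasProd

lemma tendsto_qPochhammer (a : 𝕜) {q : 𝕜} (hq : ‖q‖ < 1) :
    Tendsto (qPochhammer a q) atTop (𝓝 (qPochhammerInf a q)) :=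
  (hasProd_qPochhammerInf a hq).tendsto_prod_nat

lemma qPochhammerInf_ne_zero {a q : 𝕜} (ha : ‖a‖ < 1) (hq : ‖q‖ < 1) :
    qPochhammerInf a q ≠ 0 := by
  have hne : ∀ n : ℕ, 1 + -(a * q ^ n) ≠ 0 := fun n h ↦ by
    have hlt : ‖a * q ^ n‖ < 1 := by
      rw [norm_mul, norm_pow]
      exact mul_lt_one_of_nonneg_of_lt_one_left (norm_nonneg a) ha
        (pow_le_one₀ (norm_nonneg q) hq.le)
    rw [← sub_eq_add_neg, sub_eq_zero] at h
    rw [← h, norm_one] at hlt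
    exact hlt.false
  simpa only [qPochhammerInf, sub_eq_add_neg] using tprod_one_add_ne_zero_of_summable hne
    (by simpa only [norm_neg] using summable_norm_mul_pow a hq)

lemma qPochhammerInf_eq_mul_sq (a : 𝕜) {q : 𝕜} (hq : ‖q‖ < 1) :
    qPochhammerInf a q = qPochhammerInf a (q ^ 2) * qPochhammerInf (a * q) (q ^ 2) := by
  have hq₂ := norm_pow_lt_one hq two_ne_zero
  refine (hasProd_qPochhammerInf a hq).unique (HasProd.even_mul_odd ?_ ?_)
  · simpa only [pow_mul] using hasProd_qPochhammerInf a hq₂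
  · simpa only [pow_succ', pow_mul, mul_assoc] using hasProd_qPochhammerInf (a * q) hq₂

lemma qPochhammerInf_sq (a : 𝕜) {q : 𝕜} (hq : ‖q‖ < 1) :
    qPochhammerInf (a ^ 2) (q ^ 2) = qPochhammerInf a q * qPochhammerInf (-a) q := by
  refine (hasProd_qPochhammerInf _ (norm_pow_lt_one hq two_ne_zero)).unique ?_
  convert (hasProd_qPochhammerInf a hq).mul (hasProd_qPochhammerInf (-a) hq) using 2 with n
  ring

lemma qPochhammerInf_dissection (x y : 𝕜) {p : 𝕜} (hp : ‖p‖ < 1) :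
    qPochhammerInf x (p ^ 2) * qPochhammerInf (y * p) (p ^ 2) *
        qPochhammerInf (y ^ 2) ((p ^ 2) ^ 2) * qPochhammerInf ((x * p) ^ 2) ((p ^ 2) ^ 2) =
      qPochhammerInf x p * qPochhammerInf y p *
        (qPochhammerInf (-(x * p)) (p ^ 2) * qPochhammerInf (-y) (p ^ 2)) := by
  have hp₂ := norm_pow_lt_one hp two_ne_zero
  rw [qPochhammerInf_sq y hp₂, qPochhammerInf_sq (x * p) hp₂, qPochhammerInf_eq_mul_sq x hp,
    qPochhammerInf_eq_mul_sq y hp]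
  ring

lemma tendsto_invQFactorial_atTop {q : 𝕜} (hq : ‖q‖ < 1) :
    Tendsto (invQFactorial q) atTop (𝓝 (qPochhammerInf q q)⁻¹) := by
  have h := (tendsto_qPochhammer q hq).inv₀ (qPochhammerInf_ne_zero hq hq)
  rw [← Nat.map_cast_int_atTop, tendsto_map'_iff]
  exact h

lemma tendsto_centralQBinom {q : 𝕜} (hq : ‖q‖ < 1) (j : ℤ) :
    Tendsto (centralQBinom q · j) atTop (𝓝 (qPochhammerInf q q)⁻¹) := by
  have hne := qPochhammerInf_ne_zero hq hq
  have hfac : Tendsto (fun N : ℕ ↦ qPochhammer q q (2 * N)) atTop (𝓝 (qPochhammerInf q q)) :=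
    (tendsto_qPochhammer q hq).comp (tendsto_id.const_mul_atTop' two_pos)
  have hinv (i : ℤ) :
      Tendsto (fun N : ℕ ↦ invQFactorial q (N + i)) atTop (𝓝 (qPochhammerInf q q)⁻¹) :=
    (tendsto_invQFactorial_atTop hq).comp
      (tendsto_atTop_add_const_right _ i tendsto_natCast_atTop_atTop)
  simpa only [centralQBinom, ← sub_eq_add_neg, mul_inv_cancel₀ hne, one_mul] using
    (hfac.mul (hinv j)).mul (hinv (-j))

lemma exists_norm_invQFactorial_le {q : 𝕜} (hq : ‖q‖ < 1) :
    ∃ C, ∀ k, ‖invQFactorial q k‖ ≤ C := by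
  have h := (tendsto_qPochhammer q hq).inv₀ (qPochhammerInf_ne_zero hq hq)
  obtain ⟨C, hC⟩ := (Metric.isBounded_range_of_tendsto _ h).exists_norm_le
  have hC' (n : ℕ) : ‖(qPochhammer q q n)⁻¹‖ ≤ C := hC _ ⟨n, rfl⟩
  refine ⟨C, fun k ↦ ?_⟩
  cases k with
  | ofNat n => exact hC' n
  | negSucc n => simpa only [invQFactorial, norm_zero] using (norm_nonneg _).trans (hC' 0)

lemma exists_norm_centralQBinom_le {q : 𝕜} (hq : ‖q‖ < 1) :
    ∃ C, ∀ N j, ‖centralQBinom q N j‖ ≤ C := by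
  obtain ⟨C, hC⟩ := exists_norm_invQFactorial_le hq
  obtain ⟨D, hD⟩ :=
    (Metric.isBounded_range_of_tendsto _ (tendsto_qPochhammer q hq)).exists_norm_le
  have hC₀ : 0 ≤ C := (norm_nonneg _).trans (hC 0)
  have hD' (n : ℕ) : ‖qPochhammer q q n‖ ≤ D := hD _ ⟨n, rfl⟩
  have hD₀ : 0 ≤ D := (norm_nonneg _).trans (hD' 0)
  refine ⟨D * C * C, fun N j ↦ ?_⟩
  rw [centralQBinom, norm_mul, norm_mul]
  gcongr
  exacts [hD' _, hC _, hC _]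

theorem jacobi_triple_product {q z : 𝕜} (hq₀ : q ≠ 0) (hq : ‖q‖ < 1) (hz : z ≠ 0) :
    ∑' j : ℤ, q ^ (j ^ 2) * z ^ j =
      qPochhammerInf (q ^ 2) (q ^ 2) *
        (qPochhammerInf (-(z * q)) (q ^ 2) * qPochhammerInf (-(z⁻¹ * q)) (q ^ 2)) := by
  have hq₂ := norm_pow_lt_one hq two_ne_zero
  obtain ⟨C, hC⟩ := exists_norm_centralQBinom_le hq₂
  have hsum : Tendsto
      (fun N ↦ ∑' j : ℤ, centralQBinom (q ^ 2) N j * (q ^ (j ^ 2) * z ^ j)) atTop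
      (𝓝 (∑' j : ℤ, (qPochhammerInf (q ^ 2) (q ^ 2))⁻¹ * (q ^ (j ^ 2) * z ^ j))) := by
    refine tendsto_tsum_of_dominated_convergence
      ((summable_norm_zpow_sq_mul_zpow hq z).mul_left C)
      (fun j ↦ (tendsto_centralQBinom hq₂ j).mul_const _) (.of_forall fun N j ↦ ?_)
    rw [norm_mul]
    gcongr
    exact hC N j
  have hprod := (tendsto_qPochhammer (-(z * q)) hq₂).mul (tendsto_qPochhammer (-(z⁻¹ * q)) hq₂)
  have hfinite := hasSum_finite_jacobi_triple_product hq₀ (not_isOfFinOrder_of_norm_lt_one hq) hz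
  simp only [(hfinite _).tsum_eq, tsum_mul_left] at hsum
  rw [tendsto_nhds_unique hprod hsum, mul_inv_cancel_left₀ (qPochhammerInf_ne_zero hq₂ hq₂)]

lemma tsum_zpow_mul_add_eq_qPochhammerInf {m s : ℕ} (hsm : s < m) {q : 𝕜} (hq : ‖q‖ < 1) :
    ∑' n : ℤ, q ^ (n * ((m : ℤ) * n + s)) =
      qPochhammerInf (q ^ (2 * m)) (q ^ (2 * m)) *
        (qPochhammerInf (-q ^ (m + s)) (q ^ (2 * m)) *
          qPochhammerInf (-q ^ (m - s)) (q ^ (2 * m))) := by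
  obtain rfl | hq₀ := eq_or_ne q 0
  · have hexp (n : ℤ) (hn : n ≠ 0) : n * (m * n + s) ≠ 0 := by
      refine mul_ne_zero hn fun h ↦ ?_
      have hdvd : (m : ℤ) ∣ s := ⟨-n, by linear_combination h⟩
      obtain rfl : s = 0 := Nat.eq_zero_of_dvd_of_lt (Int.natCast_dvd_natCast.1 hdvd) hsm
      simp_all
    rw [tsum_eq_single 0 fun n hn ↦ zero_zpow _ (hexp n hn), zero_pow (by omega : 2 * m ≠ 0),
      zero_pow (by omega : m + s ≠ 0), zero_pow (by omega : m - s ≠ 0)]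
    simp [qPochhammerInf_zero_left]
  · have hterm (n : ℤ) : q ^ (n * ((m : ℤ) * n + s)) = (q ^ m) ^ (n ^ 2) * (q ^ s) ^ n := by
      rw [← zpow_natCast q m, ← zpow_natCast q s, ← zpow_mul, ← zpow_mul, ← zpow_add₀ hq₀]
      ring_nf
    have hplus : q ^ s * q ^ m = q ^ (m + s) := by rw [← pow_add, add_comm]
    have hminus : (q ^ s)⁻¹ * q ^ m = q ^ (m - s) := by rw [pow_sub₀ q hq₀ hsm.le, mul_comm]
    rw [tsum_congr hterm, jacobi_triple_product (pow_ne_zero m hq₀)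
      (norm_pow_lt_one hq (by omega)) (pow_ne_zero s hq₀), hplus, hminus, ← pow_mul, mul_comm m 2]

lemma hasProd_one_sub_pow {q : 𝕜} (hq : ‖q‖ < 1) (e : ℕ) {d : ℕ} (hd : d ≠ 0) :
    HasProd (fun n : ℕ ↦ 1 - q ^ (e + d * n)) (qPochhammerInf (q ^ e) (q ^ d)) := by
  simpa only [pow_add, pow_mul] using hasProd_qPochhammerInf (q ^ e) (norm_pow_lt_one hq hd)

theorem stmt7_general {m s : ℕ} (hs : 0 < s) (hsm : s < m) {q : 𝕜} (hq : ‖q‖ < 1) :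
    (∏' n : ℕ, ((1 - q ^ (s + 2 * m * n)) * (1 - q ^ (2 * m - s + 2 * m * n)) *
        (1 - q ^ (2 * m + 2 * m * n)) * (1 - q ^ (2 * m - 2 * s + 4 * m * n)) *
        (1 - q ^ (2 * m + 2 * s + 4 * m * n)))) /
      (∏' n : ℕ, ((1 - q ^ (s + m * n)) * (1 - q ^ (m - s + m * n)))) =
    ∑' n : ℤ, q ^ (n * ((m : ℤ) * n + (s : ℤ))) := by
  have hm : m ≠ 0 := by omega
  have hp : ‖q ^ m‖ < 1 := norm_pow_lt_one hq hm
  have hprod (e : ℕ) {d : ℕ} (hd : d ≠ 0) := hasProd_one_sub_pow hq e hd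
  have h2m : 2 * m ≠ 0 := by omega
  have h4m : 4 * m ≠ 0 := by omega
  have hne (e : ℕ) (he : e ≠ 0) : qPochhammerInf (q ^ e) (q ^ m) ≠ 0 :=
    qPochhammerInf_ne_zero (norm_pow_lt_one hq he) hp
  rw [(((((hprod s h2m).mul (hprod (2 * m - s) h2m)).mul (hprod (2 * m) h2m)).mul
      (hprod (2 * m - 2 * s) h4m)).mul (hprod (2 * m + 2 * s) h4m)).tprod_eq,
    ((hprod s hm).mul (hprod (m - s) hm)).tprod_eq, tsum_zpow_mul_add_eq_qPochhammerInf hsm hq,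
    div_eq_iff (mul_ne_zero (hne s hs.ne') (hne (m - s) (by omega)))]
  have hdissect := qPochhammerInf_dissection (q ^ s) (q ^ (m - s)) hp
  simp only [← pow_mul, ← pow_add, show m - s + m = 2 * m - s by omega,
    show (m - s) * 2 = 2 * m - 2 * s by omega, add_comm s m,
    show (m + s) * 2 = 2 * m + 2 * s by omega, mul_comm m 2,
    show 2 * m * 2 = 4 * m by omega] at hdissect
  linear_combination qPochhammerInf (q ^ (2 * m)) (q ^ (2 * m)) * hdissect

end Infinite

/-- For integers `m ≥ 2`, `0 < s < m` and `|q| < 1`: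
`(q^s, q^{2m−s}, q^{2m}; q^{2m})_∞ (q^{2m−2s}, q^{2m+2s}; q^{4m})_∞ / (q^s, q^{m−s}; q^m)_∞
  = Σ_{n∈ℤ} q^{n(mn+s)}`. -/
theorem stmt7 (m s : ℕ) (hm : 2 ≤ m) (hs : 0 < s) (hsm : s < m)
    (q : ℂ) (hq : ‖q‖ < 1) :
    (∏' n : ℕ, ((1 - q ^ (s + 2 * m * n)) * (1 - q ^ (2 * m - s + 2 * m * n)) *
        (1 - q ^ (2 * m + 2 * m * n)) * (1 - q ^ (2 * m - 2 * s + 4 * m * n)) *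
        (1 - q ^ (2 * m + 2 * s + 4 * m * n)))) /
      (∏' n : ℕ, ((1 - q ^ (s + m * n)) * (1 - q ^ (m - s + m * n)))) =
    ∑' n : ℤ, q ^ (n * ((m : ℤ) * n + (s : ℤ))) :=
  stmt7_general hs hsm hq
end

section
/- Let m and s be integers with m ≥ 2 and 0 < s < m, and let q be a complex number with |q| < 1. Then ∏_{n=0}^{∞} (1 + q^{m+s+2mn})(1 + q^{m−s+2mn})(1 − q^{2m+2mn}) = Σ_{n∈ℤ} q^{n(mn+s)}. -/
/-!
The identity is the Jacobi triple product in Ramanujan's form: if `‖ab‖ < 1` and `p = ab`, then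
`(-a; p)_∞ (-b; p)_∞ (p; p)_∞ = ∑_{n ∈ ℤ} a^{n(n+1)/2} b^{n(n-1)/2}`; take `a = q^{m+s}` and
`b = q^{m-s}`. It is the limit of the finite identity
`(-a; p)_M (-b; p)_N = ∑_{-N ≤ n ≤ M} [M+N, N+n]_p a^{n(n+1)/2} b^{n(n-1)/2}`, in which raising `M`
or `N` by one is one of the two `q`-Pascal rules. Along `M = N` the Gaussian binomials are bounded
and tend to `1 / (p; p)_∞`, so dominated convergence applies.
-/

open Filter Finset Topology

namespace JacobiTripleProduct

section CommSemiring

variable {R : Type*} [CommSemiring R]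

/-- The Gaussian binomial coefficient `[n, k]_q`, defined by a `q`-Pascal rule rather than as a
quotient so that it makes sense for every `q`, roots of unity included. -/
def qBinom (q : R) : ℕ → ℕ → R
  | _, 0 => 1
  | 0, _ + 1 => 0
  | n + 1, k + 1 => qBinom q n k + q ^ (k + 1) * qBinom q n (k + 1)

@[simp]
lemma qBinom_zero_right (q : R) (n : ℕ) : qBinom q n 0 = 1 := by
  cases n <;> rfl

lemma qBinom_succ_succ (q : R) (n k : ℕ) :
    qBinom q (n + 1) (k + 1) = qBinom q n k + q ^ (k + 1) * qBinom q n (k + 1) :=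
  rfl

lemma qBinom_eq_zero_of_lt (q : R) {n k : ℕ} (h : n < k) : qBinom q n k = 0 := by
  induction n generalizing k with
  | zero => obtain ⟨k, rfl⟩ := Nat.exists_eq_succ_of_ne_zero h.ne'; rfl
  | succ n ih =>
    obtain ⟨k, rfl⟩ := Nat.exists_eq_succ_of_ne_zero (Nat.ne_zero_of_lt h)
    rw [Nat.succ_eq_add_one, qBinom_succ_succ, ih (by omega), ih (by omega), mul_zero, add_zero]

@[simp]
lemma qBinom_self (q : R) (n : ℕ) : qBinom q n n = 1 := by
  induction n with
  | zero => rfl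
  | succ n ih =>
    rw [qBinom_succ_succ, ih, qBinom_eq_zero_of_lt q n.lt_succ_self, mul_zero, add_zero]

lemma qBinom_succ_succ' (q : R) {n k l : ℕ} (h : k + l = n) :
    qBinom q (n + 1) (k + 1) = qBinom q n (k + 1) + q ^ l * qBinom q n k := by
  induction n generalizing k l with
  | zero =>
    obtain ⟨rfl, rfl⟩ : k = 0 ∧ l = 0 := by omega
    simp [qBinom]
  | succ n ih =>
    rcases k with - | k
    · obtain rfl : l = n + 1 := by omega
      calc qBinom q (n + 2) 1
          = 1 + q ^ 1 * qBinom q (n + 1) 1 := by rw [qBinom_succ_succ, qBinom_zero_right]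
        _ = 1 + q ^ 1 * (qBinom q n 1 + q ^ n * 1) := by rw [ih (zero_add n), qBinom_zero_right]
        _ = 1 + q ^ 1 * qBinom q n 1 + q ^ (n + 1) * 1 := by ring
        _ = qBinom q (n + 1) 1 + q ^ (n + 1) * qBinom q (n + 1) 0 := by
          rw [qBinom_succ_succ, qBinom_zero_right, qBinom_zero_right]
    rcases l with - | l
    · obtain rfl : k = n := by omega
      simp [qBinom_eq_zero_of_lt q (k + 1).lt_succ_self]
    · calc qBinom q (n + 2) (k + 2)
          = qBinom q (n + 1) (k + 1) + q ^ (k + 2) * qBinom q (n + 1) (k + 2) :=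
            qBinom_succ_succ ..
        _ = qBinom q n (k + 1) + q ^ (l + 1) * qBinom q n k +
              q ^ (k + 2) * (qBinom q n (k + 2) + q ^ l * qBinom q n (k + 1)) := by
          rw [ih (show k + (l + 1) = n by omega), ih (show k + 1 + l = n by omega)]
        _ = qBinom q n (k + 1) + q ^ (k + 2) * qBinom q n (k + 2) +
              q ^ (l + 1) * (qBinom q n k + q ^ (k + 1) * qBinom q n (k + 1)) := by
          ring
        _ = qBinom q (n + 1) (k + 2) + q ^ (l + 1) * qBinom q (n + 1) (k + 1) := by
          rw [← qBinom_succ_succ, ← qBinom_succ_succ]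

/-- The triangular number `n (n + 1) / 2`, also for negative `n`, where it is again natural. -/
def triangular (n : ℤ) : ℕ := (n * (n + 1) / 2).toNat

lemma two_mul_triangular (n : ℤ) : 2 * (triangular n : ℤ) = n * (n + 1) := by
  have h_nonneg : 0 ≤ n * (n + 1) := by
    rcases le_or_gt 0 n with h | h <;> nlinarith
  have h_even := (Int.even_mul_succ_self n).two_dvd
  unfold triangular
  omega

/-- The term `a ^ (n (n + 1) / 2) * b ^ (n (n - 1) / 2)` of Ramanujan's theta series `f(a, b)`;
the second exponent is the triangular number of `-n`. -/
def thetaTerm (a b : R) (n : ℤ) : R := a ^ triangular n * b ^ triangular (-n)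

lemma thetaTerm_neg (a b : R) (n : ℤ) : thetaTerm a b (-n) = thetaTerm b a n := by
  rw [thetaTerm, thetaTerm, neg_neg, mul_comm]

lemma thetaTerm_zero (a b : R) : thetaTerm a b 0 = 1 := by
  simp [thetaTerm, triangular]

lemma thetaTerm_add_one_mul_pow (a b : R) {n : ℤ} {M j : ℕ} (h : n + j = M) :
    thetaTerm a b (n + 1) * (a * b) ^ j = thetaTerm a b n * (a * (a * b) ^ M) := by
  have h_fst : triangular (n + 1) + j = triangular n + 1 + M := by
    zify
    linarith [two_mul_triangular n, two_mul_triangular (n + 1)]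
  have h_snd : triangular (-(n + 1)) + j = triangular (-n) + M := by
    zify
    linarith [two_mul_triangular (-n), two_mul_triangular (-(n + 1))]
  calc thetaTerm a b (n + 1) * (a * b) ^ j
      = a ^ (triangular (n + 1) + j) * b ^ (triangular (-(n + 1)) + j) := by
        rw [thetaTerm]; ring
    _ = thetaTerm a b n * (a * (a * b) ^ M) := by
        rw [h_fst, h_snd, thetaTerm]; ring

lemma thetaTerm_sub_one_mul_pow (a b : R) {n : ℤ} {N j : ℕ} (h : j = N + n) :
    thetaTerm a b (n - 1) * (a * b) ^ j = thetaTerm a b n * (b * (a * b) ^ N) := by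
  have := thetaTerm_add_one_mul_pow b a (n := -n) (M := N) (j := j) (by omega)
  rwa [show -n + 1 = -(n - 1) by ring, thetaTerm_neg, thetaTerm_neg, mul_comm b a] at this

end CommSemiring

section CommRing

variable {R : Type*} [CommRing R]

/-- The finite `q`-Pochhammer symbol `(a; q)_n`. -/
def qPochhammer (a q : R) (n : ℕ) : R := ∏ i ∈ range n, (1 - a * q ^ i)

@[simp]
lemma qPochhammer_zero (a q : R) : qPochhammer a q 0 = 1 := prod_range_zero _

lemma qPochhammer_succ (a q : R) (n : ℕ) :
    qPochhammer a q (n + 1) = qPochhammer a q n * (1 - a * q ^ n) :=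
  prod_range_succ _ _

lemma qBinom_mul_qPochhammer_mul_qPochhammer (q : R) (k l : ℕ) :
    qBinom q (k + l) k * qPochhammer q q k * qPochhammer q q l = qPochhammer q q (k + l) := by
  induction k generalizing l with
  | zero => simp
  | succ k ihk =>
    induction l with
    | zero => simp
    | succ l ihl =>
      have h_k := ihk (l + 1)
      rw [show k + (l + 1) = k + 1 + l by omega] at h_k
      rw [← add_assoc, qBinom_succ_succ, qPochhammer_succ q q (k + 1 + l)]
      simp only [qPochhammer_succ q q k, qPochhammer_succ q q l] at h_k ihl ⊢
      linear_combination (1 - q ^ (k + 1)) * h_k + q ^ (k + 1) * (1 - q ^ (l + 1)) * ihl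

lemma qPochhammer_neg_eq_sum (a b : R) (N : ℕ) :
    qPochhammer (-b) (a * b) N =
      ∑ k ∈ range (N + 1), qBinom (a * b) N k * thetaTerm a b (k - N) := by
  induction N with
  | zero => simp [thetaTerm_zero]
  | succ N ih =>
    set t := thetaTerm a b
    set p := a * b
    have h_shift (k : ℕ) : p ^ k * t (k - N - 1) = t (k - N) * (b * p ^ N) := by
      rw [mul_comm]
      exact thetaTerm_sub_one_mul_pow a b (by ring)
    symm
    calc ∑ k ∈ range (N + 2), qBinom p (N + 1) k * t (k - (N + 1 : ℕ))
        = ∑ k ∈ range (N + 1), qBinom p N k * t (k - N) +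
            (∑ k ∈ range (N + 1), qBinom p N (k + 1) * (p ^ (k + 1) * t ((k + 1 : ℕ) - N - 1)) +
              qBinom p N 0 * (p ^ 0 * t ((0 : ℕ) - N - 1))) := by
          rw [sum_range_succ', ← add_assoc, ← sum_add_distrib]
          congr 1
          · refine sum_congr rfl fun k _ ↦ ?_
            rw [qBinom_succ_succ]
            push_cast
            ring_nf
          · simp only [qBinom_zero_right]
            push_cast
            ring_nf
      _ = ∑ k ∈ range (N + 1), qBinom p N k * t (k - N) +
            ∑ k ∈ range (N + 1), qBinom p N k * t (k - N) * (b * p ^ N) := by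
          rw [← sum_range_succ' fun k ↦ qBinom p N k * (p ^ k * t (k - N - 1)),
            sum_range_succ _ (N + 1),
            qBinom_eq_zero_of_lt p N.lt_add_one, zero_mul, add_zero]
          simp only [h_shift, mul_assoc]
      _ = qPochhammer (-b) p (N + 1) := by
          rw [← sum_mul, ← ih, qPochhammer_succ]
          ring

lemma qPochhammer_neg_mul_qPochhammer_neg_eq_sum (a b : R) (M N : ℕ) :
    qPochhammer (-a) (a * b) M * qPochhammer (-b) (a * b) N =
      ∑ k ∈ range (M + N + 1), qBinom (a * b) (M + N) k * thetaTerm a b (k - N) := by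
  induction M with
  | zero => simp [qPochhammer_neg_eq_sum]
  | succ M ih =>
    set t := thetaTerm a b
    set p := a * b
    have h_shift {k : ℕ} (hk : k ∈ range (M + N + 1)) :
        t ((k + 1 : ℕ) - N) * p ^ (M + N - k) = t (k - N) * (a * p ^ M) := by
      rw [mem_range] at hk
      rw [show ((k + 1 : ℕ) - N : ℤ) = k - N + 1 by push_cast; ring]
      exact thetaTerm_add_one_mul_pow a b (by omega)
    symm
    calc ∑ k ∈ range (M + 1 + N + 1), qBinom p (M + 1 + N) k * t (k - N)
        = ∑ k ∈ range (M + N + 1), qBinom p (M + N) (k + 1) * t ((k + 1 : ℕ) - N) +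
              qBinom p (M + N) 0 * t ((0 : ℕ) - N) +
            ∑ k ∈ range (M + N + 1),
              qBinom p (M + N) k * (t ((k + 1 : ℕ) - N) * p ^ (M + N - k)) := by
          rw [Nat.add_right_comm M 1 N, sum_range_succ', add_right_comm (Finset.sum _ _),
            ← sum_add_distrib, qBinom_zero_right, qBinom_zero_right]
          congr 1
          refine sum_congr rfl fun k hk ↦ ?_
          rw [mem_range] at hk
          rw [qBinom_succ_succ' p (show k + (M + N - k) = M + N by omega)]
          ring
      _ = ∑ k ∈ range (M + N + 1), qBinom p (M + N) k * t (k - N) +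
            ∑ k ∈ range (M + N + 1), qBinom p (M + N) k * t (k - N) * (a * p ^ M) := by
          rw [← sum_range_succ' fun k ↦ qBinom p (M + N) k * t (k - N),
            sum_range_succ _ (M + N + 1), qBinom_eq_zero_of_lt p (M + N).lt_add_one, zero_mul,
            add_zero]
          congr 1
          exact sum_congr rfl fun k hk ↦ by rw [h_shift hk, mul_assoc]
      _ = qPochhammer (-a) p (M + 1) * qPochhammer (-b) p N := by
          rw [← sum_mul, ← ih, qPochhammer_succ]
          ring

end CommRing

section Analysis

variable {𝕜 : Type*} [NormedField 𝕜]

/-- The infinite `q`-Pochhammer symbol `(a; q)_∞`; the product converges for `‖q‖ < 1`. -/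
noncomputable def qPochhammerInf (a q : 𝕜) : 𝕜 := ∏' i : ℕ, (1 - a * q ^ i)

lemma one_sub_mul_pow_self_ne_zero {q : 𝕜} (hq : ‖q‖ < 1) (i : ℕ) : 1 - q * q ^ i ≠ 0 := by
  rw [← pow_succ', sub_ne_zero]
  intro h
  have := pow_lt_one₀ (norm_nonneg q) hq i.succ_ne_zero
  rw [← norm_pow, ← h, norm_one] at this
  exact this.false

lemma qPochhammer_self_ne_zero {q : 𝕜} (hq : ‖q‖ < 1) (n : ℕ) : qPochhammer q q n ≠ 0 :=
  prod_ne_zero_iff.mpr fun i _ ↦ one_sub_mul_pow_self_ne_zero hq i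

lemma qBinom_eq_div {q : 𝕜} (hq : ‖q‖ < 1) (k l : ℕ) :
    qBinom q (k + l) k = qPochhammer q q (k + l) / (qPochhammer q q k * qPochhammer q q l) := by
  rw [eq_div_iff (mul_ne_zero (qPochhammer_self_ne_zero hq k) (qPochhammer_self_ne_zero hq l)),
    ← mul_assoc, qBinom_mul_qPochhammer_mul_qPochhammer]

lemma summable_norm_mul_pow (a : 𝕜) {q : 𝕜} (hq : ‖q‖ < 1) :
    Summable fun i : ℕ ↦ ‖a * q ^ i‖ := by
  simp only [norm_mul, norm_pow]
  exact (summable_geometric_of_lt_one (norm_nonneg q) hq).mul_left _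

lemma summable_norm_thetaTerm_natCast {a b : 𝕜} (hab : ‖a * b‖ < 1) :
    Summable fun n : ℕ ↦ ‖thetaTerm a b n‖ := by
  have h_ratio : ∀ᶠ n : ℕ in atTop, ‖a * (a * b) ^ n‖ < 1 / 2 :=
    (summable_norm_mul_pow a hab).tendsto_atTop_zero.eventually_lt_const one_half_pos
  refine summable_of_ratio_norm_eventually_le one_half_lt_one ?_
  filter_upwards [h_ratio] with n hn
  have h_succ : thetaTerm a b (n + 1) = thetaTerm a b n * (a * (a * b) ^ n) := by
    simpa using thetaTerm_add_one_mul_pow a b (n := n) (M := n) (j := 0) (by simp)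
  rw [norm_norm, norm_norm, Nat.cast_succ, h_succ, norm_mul, mul_comm]
  gcongr

lemma summable_norm_thetaTerm {a b : 𝕜} (hab : ‖a * b‖ < 1) :
    Summable fun n : ℤ ↦ ‖thetaTerm a b n‖ := by
  refine .of_nat_of_neg (summable_norm_thetaTerm_natCast hab) ?_
  simp only [thetaTerm_neg]
  exact summable_norm_thetaTerm_natCast (mul_comm a b ▸ hab)

variable [CompleteSpace 𝕜]

lemma multipliable_one_sub_mul_pow (a : 𝕜) {q : 𝕜} (hq : ‖q‖ < 1) :
    Multipliable fun i : ℕ ↦ 1 - a * q ^ i := by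
  simpa only [neg_mul, ← sub_eq_add_neg] using
    multipliable_one_add_of_summable (summable_norm_mul_pow (-a) hq)

lemma tendsto_qPochhammer (a : 𝕜) {q : 𝕜} (hq : ‖q‖ < 1) :
    Tendsto (qPochhammer a q) atTop (𝓝 (qPochhammerInf a q)) :=
  (multipliable_one_sub_mul_pow a hq).hasProd.tendsto_prod_nat

lemma qPochhammerInf_self_ne_zero {q : 𝕜} (hq : ‖q‖ < 1) : qPochhammerInf q q ≠ 0 := by
  have := tprod_one_add_ne_zero_of_summable (f := fun i : ℕ ↦ -q * q ^ i)
    (fun i ↦ by simpa [← sub_eq_add_neg] using one_sub_mul_pow_self_ne_zero hq i)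
    (summable_norm_mul_pow (-q) hq)
  simpa only [neg_mul, ← sub_eq_add_neg, qPochhammerInf] using this

lemma tendsto_qBinom_add {q : 𝕜} (hq : ‖q‖ < 1) {ι : Type*} {F : Filter ι} {k l : ι → ℕ}
    (hk : Tendsto k F atTop) (hl : Tendsto l F atTop) :
    Tendsto (fun i ↦ qBinom q (k i + l i) (k i)) F (𝓝 (qPochhammerInf q q)⁻¹) := by
  have h_lim := tendsto_qPochhammer q hq
  have h_ne := qPochhammerInf_self_ne_zero hq
  have h_div := (h_lim.comp (hk.atTop_add_atTop hl)).div
    ((h_lim.comp hk).mul (h_lim.comp hl)) (mul_ne_zero h_ne h_ne)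
  rw [div_mul_cancel_left₀ h_ne] at h_div
  simpa only [qBinom_eq_div hq] using! h_div

lemma exists_norm_qBinom_le {q : 𝕜} (hq : ‖q‖ < 1) : ∃ C, ∀ n k, ‖qBinom q n k‖ ≤ C := by
  have h_lim := tendsto_qPochhammer q hq
  obtain ⟨C, hC⟩ := h_lim.norm.bddAbove_range
  obtain ⟨D, hD⟩ := (h_lim.inv₀ (qPochhammerInf_self_ne_zero hq)).norm.bddAbove_range
  replace hC n : ‖qPochhammer q q n‖ ≤ C := hC ⟨n, rfl⟩
  replace hD n : ‖(qPochhammer q q n)⁻¹‖ ≤ D := hD ⟨n, rfl⟩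
  have hC₀ : 0 ≤ C := (norm_nonneg _).trans (hC 0)
  have hD₀ : 0 ≤ D := (norm_nonneg _).trans (hD 0)
  refine ⟨C * (D * D), fun n k ↦ ?_⟩
  rcases lt_or_ge n k with h | h
  · rw [qBinom_eq_zero_of_lt q h, norm_zero]
    positivity
  · obtain ⟨l, rfl⟩ := Nat.exists_eq_add_of_le h
    rw [qBinom_eq_div hq, div_eq_mul_inv, mul_inv, norm_mul, norm_mul]
    gcongr
    exacts [hC _, hD _, hD _]

lemma tendsto_sum_qBinom_mul {q : 𝕜} (hq : ‖q‖ < 1) {f : ℤ → 𝕜} (hf : Summable (‖f ·‖)) :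
    Tendsto (fun N : ℕ ↦ ∑ k ∈ range (N + N + 1), qBinom q (N + N) k * f (k - N)) atTop
      (𝓝 ((qPochhammerInf q q)⁻¹ * ∑' n, f n)) := by
  obtain ⟨C, hC⟩ := exists_norm_qBinom_le hq
  let g (N : ℕ) (n : ℤ) : 𝕜 := qBinom q (N + N) (N + n).toNat * f n
  have h_sum (N : ℕ) : ∑ k ∈ range (N + N + 1), qBinom q (N + N) k * f (k - N) =
      ∑' n, (Icc (-N : ℤ) N : Set ℤ).indicator (g N) n := by
    rw [← sum_eq_tsum_indicator]
    refine sum_nbij' (fun k ↦ (k - N : ℤ)) (fun n ↦ (N + n).toNat) ?_ ?_ ?_ ?_ ?_ <;>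
      simp only [mem_range, mem_Icc, g, add_sub_cancel, Int.toNat_natCast, implies_true] <;> omega
  have h_lim (n : ℤ) : Tendsto (fun N : ℕ ↦ (Icc (-N : ℤ) N : Set ℤ).indicator (g N) n) atTop
      (𝓝 ((qPochhammerInf q q)⁻¹ * f n)) := by
    have h_atTop (j : ℤ) : Tendsto (fun N : ℕ ↦ (N + j).toNat) atTop atTop :=
      tendsto_atTop.mpr fun b ↦ by
        filter_upwards [eventually_ge_atTop (b + j.natAbs)] with N hN
        omega
    refine ((tendsto_qBinom_add hq (h_atTop n) (h_atTop (-n))).mul_const (f n)).congr' ?_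
    filter_upwards [eventually_ge_atTop n.natAbs] with N hN
    rw [Set.indicator_of_mem (by rw [coe_Icc, Set.mem_Icc]; omega),
      show (N + n).toNat + (N + -n).toNat = N + N by omega]
  simp only [h_sum, ← tsum_mul_left]
  refine tendsto_tsum_of_dominated_convergence (hf.mul_left C) h_lim (.of_forall fun N n ↦ ?_)
  calc ‖(Icc (-N : ℤ) N : Set ℤ).indicator (g N) n‖ ≤ ‖g N n‖ := norm_indicator_le_norm_self _ _
    _ ≤ C * ‖f n‖ := by
      rw [norm_mul]
      gcongr
      exact hC _ _

theorem jacobi_triple_product {a b : 𝕜} (hab : ‖a * b‖ < 1) :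
    HasProd (fun i : ℕ ↦ (1 + a * (a * b) ^ i) * (1 + b * (a * b) ^ i) * (1 - a * b * (a * b) ^ i))
      (∑' n, thetaTerm a b n) := by
  set p := a * b
  have h_mult : Multipliable fun i : ℕ ↦ (1 + a * p ^ i) * (1 + b * p ^ i) * (1 - p * p ^ i) := by
    simpa only [neg_mul, sub_neg_eq_add] using ((multipliable_one_sub_mul_pow (-a) hab).mul
      (multipliable_one_sub_mul_pow (-b) hab)).mul (multipliable_one_sub_mul_pow p hab)
  have h_partial (N : ℕ) :
      ∏ i ∈ range N, ((1 + a * p ^ i) * (1 + b * p ^ i) * (1 - p * p ^ i)) =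
        (∑ k ∈ range (N + N + 1), qBinom p (N + N) k * thetaTerm a b (k - N)) *
          qPochhammer p p N := by
    rw [← qPochhammer_neg_mul_qPochhammer_neg_eq_sum]
    simp only [qPochhammer, ← prod_mul_distrib, neg_mul, sub_neg_eq_add, p]
  have h_lim := (tendsto_sum_qBinom_mul hab (summable_norm_thetaTerm hab)).mul
    (tendsto_qPochhammer p hab)
  rw [mul_right_comm, inv_mul_cancel₀ (qPochhammerInf_self_ne_zero hab), one_mul] at h_lim
  have h_eq := tendsto_nhds_unique h_mult.hasProd.tendsto_prod_nat
    (h_lim.congr fun N ↦ (h_partial N).symm)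
  exact h_eq ▸ h_mult.hasProd

end Analysis

lemma thetaTerm_pow_add_pow_sub {K : Type*} [Field K] (q : K) {m s : ℕ} (h : s ≤ m) (n : ℤ) :
    thetaTerm (q ^ (m + s)) (q ^ (m - s)) n = q ^ (n * (m * n + s)) := by
  have h_exp : (((m + s) * triangular n + (m - s) * triangular (-n) : ℕ) : ℤ) =
      n * (m * n + s) := by
    refine mul_left_cancel₀ two_ne_zero ?_
    push_cast [h]
    linear_combination
      (m + s : ℤ) * two_mul_triangular n + (m - s : ℤ) * two_mul_triangular (-n)
  rw [thetaTerm, ← pow_mul, ← pow_mul, ← pow_add, ← h_exp, zpow_natCast]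

end JacobiTripleProduct

open JacobiTripleProduct

theorem stmt8_general {𝕜 : Type*} [NormedField 𝕜] [CompleteSpace 𝕜] {m s : ℕ} (hm : 0 < m)
    (hsm : s ≤ m) {q : 𝕜} (hq : ‖q‖ < 1) :
    (∏' n : ℕ, ((1 + q ^ (m + s + 2 * m * n)) * (1 + q ^ (m - s + 2 * m * n)) *
        (1 - q ^ (2 * m + 2 * m * n)))) =
      ∑' n : ℤ, q ^ (n * ((m : ℤ) * n + (s : ℤ))) := by
  have h_mul : q ^ (m + s) * q ^ (m - s) = q ^ (2 * m) := by
    rw [← pow_add]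
    congr 1
    omega
  have h_norm : ‖q ^ (m + s) * q ^ (m - s)‖ < 1 := by
    rw [h_mul, norm_pow]
    exact pow_lt_one₀ (norm_nonneg q) hq (by omega)
  simpa only [h_mul, ← pow_mul, ← pow_add, thetaTerm_pow_add_pow_sub q hsm] using
    (jacobi_triple_product h_norm).tprod_eq

/-- For integers `m ≥ 2`, `0 < s < m` and `|q| < 1`:
`(−q^{m+s}; q^{2m})_∞ (−q^{m−s}; q^{2m})_∞ (q^{2m}; q^{2m})_∞ = Σ_{n∈ℤ} q^{n(mn+s)}`. -/
theorem stmt8 (m s : ℕ) (hm : 2 ≤ m) (hs : 0 < s) (hsm : s < m)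
    (q : ℂ) (hq : ‖q‖ < 1) :
    (∏' n : ℕ, ((1 + q ^ (m + s + 2 * m * n)) * (1 + q ^ (m - s + 2 * m * n)) *
        (1 - q ^ (2 * m + 2 * m * n)))) =
    ∑' n : ℤ, q ^ (n * ((m : ℤ) * n + (s : ℤ))) :=
  stmt8_general (by omega) hsm.le hq
end
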